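/- arXiv:2408.11620 — 5 statements merged into one kernel-verified Lean document; each statement's English description precedes it below -/
import Mathlib

section
/- Let p ∈ Δ*_m, q ∈ Δ*_n, let c ∈ ℝ^{m×n} with c ≥ 0 entrywise, and let (β_t)_{t≥0} be a positive, nondecreasing, concave annealing schedule with difference sequence α_t = β_t − β_{t−1}. Let (π_t) be generated by Annealed Sinkhorn and let π* be any optimal transport plan (a minimizer of ⟨c,π⟩ over Γ(p,q)). Then for every t ≥ 1: ‖π_t𝟙 − p‖₁ ≤ 3 √(α_t |⟨c, π* − π_t⟩|) + 3 √(|(β_t − β_0)/t − α_t| · |⟨c, π*⟩|) + 3 √(KL(π* | π_0)/t). -/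
open Finset Filter Topology ENNReal

noncomputable section

/-- Frobenius inner product `⟨c, π⟩ = ∑_{ij} c_ij π_ij`. -/
def frob {m n : ℕ} (c π : Matrix (Fin m) (Fin n) ℝ) : ℝ := ∑ i, ∑ j, c i j * π i j

/-- Row sums `π𝟙`. -/
def rowSum {m n : ℕ} (π : Matrix (Fin m) (Fin n) ℝ) : Fin m → ℝ := fun i => ∑ j, π i j

/-- Column sums `πᵀ𝟙`. -/
def colSum {m n : ℕ} (π : Matrix (Fin m) (Fin n) ℝ) : Fin n → ℝ := fun j => ∑ i, π i j

/-- Kullback–Leibler divergence between nonnegative vectors. -/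
def KLvec {k : ℕ} (a b : Fin k → ℝ) : ℝ := ∑ i, (a i * Real.log (a i / b i) - a i + b i)

/-- Kullback–Leibler divergence between nonnegative matrices. -/
def KLmat {m n : ℕ} (a b : Matrix (Fin m) (Fin n) ℝ) : ℝ :=
  ∑ i, ∑ j, (a i j * Real.log (a i j / b i j) - a i j + b i j)

/-- The tipless simplex `Δ*_k`: strictly positive entries summing to 1. -/
def simplexPos (k : ℕ) : Set (Fin k → ℝ) := {p | (∀ i, 0 < p i) ∧ ∑ i, p i = 1}

/-- The simplex `Δ_k`: nonnegative entries summing to 1. -/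
def simplexNN (k : ℕ) : Set (Fin k → ℝ) := {p | (∀ i, 0 ≤ p i) ∧ ∑ i, p i = 1}

/-- Transport plans `Γ(p, q)`. -/
def Gamma {m n : ℕ} (p : Fin m → ℝ) (q : Fin n → ℝ) : Set (Matrix (Fin m) (Fin n) ℝ) :=
  {π | (∀ i j, 0 ≤ π i j) ∧ rowSum π = p ∧ colSum π = q}

/-- Half-relaxed plans `Γ(*, q)`. -/
def GammaStar {m n : ℕ} (q : Fin n → ℝ) : Set (Matrix (Fin m) (Fin n) ℝ) :=
  {π | (∀ i j, 0 ≤ π i j) ∧ colSum π = q}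

/-- Reference plan `π^ref = (mn)⁻¹ 𝟙𝟙ᵀ`. -/
def piRef (m n : ℕ) : Matrix (Fin m) (Fin n) ℝ := fun _ _ => 1 / (m * n)

/-- Optimal transport value `OT(p,q)`. -/
def OTval {m n : ℕ} (c : Matrix (Fin m) (Fin n) ℝ) (p : Fin m → ℝ) (q : Fin n → ℝ) : ℝ :=
  ⨅ π : Gamma p q, frob c π.1

/-- Entropic OT objective `⟨c,π⟩ + β⁻¹ KL(π|π^ref)`. -/
def eotObj {m n : ℕ} (c : Matrix (Fin m) (Fin n) ℝ) (β : ℝ) (π : Matrix (Fin m) (Fin n) ℝ) : ℝ :=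
  frob c π + β⁻¹ * KLmat π (piRef m n)

/-- Entropic OT value `EOT_β(p,q)`. -/
def eotVal {m n : ℕ} (c : Matrix (Fin m) (Fin n) ℝ) (β : ℝ) (p : Fin m → ℝ) (q : Fin n → ℝ) : ℝ :=
  ⨅ π : Gamma p q, eotObj c β π.1

/-- Gibbs kernel `K = e^{-βc}` (entrywise). -/
def gibbs {m n : ℕ} (c : Matrix (Fin m) (Fin n) ℝ) (β : ℝ) : Matrix (Fin m) (Fin n) ℝ :=
  fun i j => Real.exp (-(β * c i j))

/-- Annealed Sinkhorn scaling vectors `(a_t, b_t)`: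
`b_0 = 𝟙`, `a_{t+1} = p ⊘ (K_t b_t)`, `b_{t+1} = q ⊘ (K_{t+1}ᵀ a_{t+1})`, `K_t = e^{-β_t c}`. -/
def sinkAB {m n : ℕ} (p : Fin m → ℝ) (q : Fin n → ℝ) (c : Matrix (Fin m) (Fin n) ℝ)
    (β : ℕ → ℝ) : ℕ → (Fin m → ℝ) × (Fin n → ℝ)
  | 0 => (fun _ => 1, fun _ => 1)
  | t + 1 =>
    let prev := sinkAB p q c β t
    let a : Fin m → ℝ := fun i => p i / ∑ j, gibbs c (β t) i j * prev.2 j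
    (a, fun j => q j / ∑ i, gibbs c (β (t + 1)) i j * a i)

/-- Annealed Sinkhorn primal iterate `π_t = diag(a_t) K_t diag(b_t)`. -/
def sinkPlan {m n : ℕ} (p : Fin m → ℝ) (q : Fin n → ℝ) (c : Matrix (Fin m) (Fin n) ℝ)
    (β : ℕ → ℝ) (t : ℕ) : Matrix (Fin m) (Fin n) ℝ :=
  fun i j => (sinkAB p q c β t).1 i * gibbs c (β t) i j * (sinkAB p q c β t).2 j

/-- `ℓ¹` norm of a vector. -/
def l1vec {k : ℕ} (a : Fin k → ℝ) : ℝ := ∑ i, |a i|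

/-- Oscillation semi-norm `‖c‖_osc = max c - min c`. -/
def cOsc {m n : ℕ} (c : Matrix (Fin m) (Fin n) ℝ) : ℝ :=
  (⨆ i, ⨆ j, c i j) - ⨅ i, ⨅ j, c i j

/-- `‖log p‖_∞`. -/
def logSup {k : ℕ} (p : Fin k → ℝ) : ℝ := ⨆ i, |Real.log (p i)|

/-- The rounding ("projection") procedure of Altschuler et al. (Algorithm 3). -/
def roundPlan {m n : ℕ} (p : Fin m → ℝ) (q : Fin n → ℝ) (π : Matrix (Fin m) (Fin n) ℝ) :
    Matrix (Fin m) (Fin n) ℝ :=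
  let π' : Matrix (Fin m) (Fin n) ℝ := fun i j => min 1 (p i / rowSum π i) * π i j
  let π'' : Matrix (Fin m) (Fin n) ℝ := fun i j => π' i j * min 1 (q j / colSum π' j)
  fun i j => π'' i j +
    (p i - rowSum π'' i) * (q j - colSum π'' j) / l1vec (fun i' => p i' - rowSum π'' i')

/-- Relaxed entropic objective `F^reg(π) = ⟨c,π⟩ + α⁻¹ KL(π𝟙|p) + β⁻¹ KL(π|π^ref)`. -/
def Freg {m n : ℕ} (c : Matrix (Fin m) (Fin n) ℝ) (p : Fin m → ℝ) (α β : ℝ)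
    (π : Matrix (Fin m) (Fin n) ℝ) : ℝ :=
  frob c π + α⁻¹ * KLvec (rowSum π) p + β⁻¹ * KLmat π (piRef m n)

/-- Dual functional for the relaxed entropic problem. -/
def dualFun {m n : ℕ} (p : Fin m → ℝ) (q : Fin n → ℝ) (c : Matrix (Fin m) (Fin n) ℝ)
    (α β : ℝ) (u : Fin m → ℝ) (v : Fin n → ℝ) : ℝ :=
  α⁻¹ * (∑ i, (1 - Real.exp (-(α * u i))) * p i) + ∑ j, v j * q j
    - β⁻¹ * (∑ i, ∑ j, Real.exp (β * (u i + v j - c i j)) * piRef m n i j) + β⁻¹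

/-- Dual functional of entropic OT. -/
def eotDual {m n : ℕ} (p : Fin m → ℝ) (q : Fin n → ℝ) (c : Matrix (Fin m) (Fin n) ℝ)
    (β : ℝ) (u : Fin m → ℝ) (v : Fin n → ℝ) : ℝ :=
  ∑ i, p i * u i + ∑ j, q j * v j
    + β⁻¹ * (1 - ∑ i, ∑ j, piRef m n i j * Real.exp (β * (u i + v j - c i j)))

/-- The set `C_β` of plans of the form `diag(a) e^{-βc} diag(b)` with `a, b ≥ 0`. -/
def scalingSet {m n : ℕ} (c : Matrix (Fin m) (Fin n) ℝ) (β : ℝ) :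
    Set (Matrix (Fin m) (Fin n) ℝ) :=
  {π | ∃ a : Fin m → ℝ, ∃ b : Fin n → ℝ, (∀ i, 0 ≤ a i) ∧ (∀ j, 0 ≤ b j) ∧
    π = fun i j => a i * Real.exp (-(β * c i j)) * b j}



/-- Basic variational lower bound for the scalar KL integrand. -/
lemma kl_scalar_lower {x y l : ℝ} (hx : 0 ≤ x) (hy : 0 < y) (hl : 0 < l) :
    x * Real.log l + y - y * l ≤ x * Real.log (x / y) - x + y := by
  rcases hx.eq_or_lt with h | h
  · subst h
    have : 0 < y * l := by positivity
    simp; linarith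
  · have h1 := Real.log_le_sub_one_of_pos (x := y * l / x) (by positivity)
    have h2 : Real.log (y * l / x) = Real.log l - Real.log (x / y) := by
      rw [Real.log_div (by positivity) h.ne', Real.log_mul hy.ne' hl.ne',
        Real.log_div h.ne' hy.ne']
      ring
    rw [h2] at h1
    have h3 := mul_le_mul_of_nonneg_left h1 hx
    have h4 : x * (y * l / x - 1) = y * l - x := by field_simp
    rw [h4] at h3
    linarith

lemma kl_scalar_nonneg {x y : ℝ} (hx : 0 ≤ x) (hy : 0 < y) :
    0 ≤ x * Real.log (x / y) - x + y := by
  have := kl_scalar_lower hx hy one_pos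
  simpa using this

lemma KLvec_nonneg {k : ℕ} (a b : Fin k → ℝ) (ha : ∀ i, 0 ≤ a i) (hb : ∀ i, 0 < b i) :
    0 ≤ KLvec a b := Finset.sum_nonneg fun i _ => kl_scalar_nonneg (ha i) (hb i)

lemma KLmat_nonneg {m n : ℕ} (a b : Matrix (Fin m) (Fin n) ℝ) (ha : ∀ i j, 0 ≤ a i j)
    (hb : ∀ i j, 0 < b i j) : 0 ≤ KLmat a b :=
  Finset.sum_nonneg fun i _ => Finset.sum_nonneg fun j _ => kl_scalar_nonneg (ha i j) (hb i j)

/-- Data processing: KL of row sums is at most KL. -/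
lemma KLvec_rowSum_le {m n : ℕ} (a b : Matrix (Fin m) (Fin n) ℝ) (ha : ∀ i j, 0 < a i j)
    (hb : ∀ i j, 0 < b i j) (hra : ∀ i, 0 < rowSum a i) (hrb : ∀ i, 0 < rowSum b i) :
    KLvec (rowSum a) (rowSum b) ≤ KLmat a b := by
  refine Finset.sum_le_sum fun i _ => ?_
  have hl : 0 < rowSum a i / rowSum b i := div_pos (hra i) (hrb i)
  have h := Finset.sum_le_sum (s := Finset.univ) fun j _ =>
    kl_scalar_lower (ha i j).le (hb i j) hl
  refine le_trans (le_of_eq ?_) h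
  rw [Finset.sum_sub_distrib, Finset.sum_add_distrib, ← Finset.sum_mul, ← Finset.sum_mul]
  change _ = rowSum a i * _ + rowSum b i - rowSum b i * _
  have := (hrb i).ne'
  field_simp
  ring

lemma hellinger_scalar {x y : ℝ} (hx : 0 < x) (hy : 0 < y) :
    (√x - √y) ^ 2 ≤ x * Real.log (x / y) - x + y := by
  have hsx : 0 < √x := Real.sqrt_pos.2 hx
  have hsy : 0 < √y := Real.sqrt_pos.2 hy
  have h1 := Real.log_le_sub_one_of_pos (x := √y / √x) (by positivity)
  have h2 : Real.log (√y / √x) = - (Real.log (x / y) / 2) := by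
    rw [Real.log_div hsy.ne' hsx.ne', Real.log_sqrt hx.le, Real.log_sqrt hy.le,
      Real.log_div hx.ne' hy.ne']
    ring
  rw [h2] at h1
  have h3 := mul_le_mul_of_nonneg_left h1 hx.le
  have ex : √x * √x = x := Real.mul_self_sqrt hx.le
  have ey : √y * √y = y := Real.mul_self_sqrt hy.le
  have h4 : x * (√y / √x - 1) = √x * √y - x := by
    have : x * (√y / √x) = √x * √y := by
      rw [mul_div_assoc', div_eq_iff hsx.ne']
      nth_rewrite 1 [← ex]; ring
    rw [mul_sub, this, mul_one]
  rw [h4] at h3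
  nlinarith

/-- A weak Pinsker inequality. -/
lemma weak_pinsker {k : ℕ} (r p : Fin k → ℝ) (hr : ∀ i, 0 < r i) (hp : ∀ i, 0 < p i)
    (sr : ∑ i, r i = 1) (sp : ∑ i, p i = 1) :
    (l1vec fun i => r i - p i) ^ 2 ≤ 4 * KLvec r p := by
  have hH : ∑ i, |√(r i) - √(p i)| ^ 2 ≤ KLvec r p :=
    Finset.sum_le_sum fun i _ => by
      rw [sq_abs]; exact hellinger_scalar (hr i) (hp i)
  have hS : ∑ i, (√(r i) + √(p i)) ^ 2 ≤ 4 := by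
    have : ∑ i, (√(r i) + √(p i)) ^ 2 ≤ ∑ i, (2 * r i + 2 * p i) := by
      refine Finset.sum_le_sum fun i _ => ?_
      nlinarith [Real.sq_sqrt (hr i).le, Real.sq_sqrt (hp i).le, sq_nonneg (√(r i) - √(p i))]
    rw [Finset.sum_add_distrib, ← Finset.mul_sum, ← Finset.mul_sum, sr, sp] at this
    linarith
  have hcs := Finset.sum_mul_sq_le_sq_mul_sq Finset.univ
    (fun i => |√(r i) - √(p i)|) (fun i => √(r i) + √(p i))
  have he : (l1vec fun i => r i - p i) = ∑ i, |√(r i) - √(p i)| * (√(r i) + √(p i)) := by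
    refine Finset.sum_congr rfl fun i _ => ?_
    have h0 : 0 ≤ √(r i) + √(p i) := by positivity
    have e : r i - p i = (√(r i) - √(p i)) * (√(r i) + √(p i)) := by
      nlinarith [Real.sq_sqrt (hr i).le, Real.sq_sqrt (hp i).le]
    change |r i - p i| = _
    rw [e, abs_mul, abs_of_nonneg h0]
  rw [he]
  have h0 : 0 ≤ ∑ i, |√(r i) - √(p i)| ^ 2 := Finset.sum_nonneg fun i _ => sq_nonneg _
  calc _ ≤ _ := hcs
    _ ≤ (∑ i, |√(r i) - √(p i)| ^ 2) * 4 := mul_le_mul_of_nonneg_left hS h0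
    _ ≤ _ := by linarith

/-- Change of KL along a scaling step. -/
lemma kl_diff {m n : ℕ} (p r : Fin m → ℝ) (q v : Fin n → ℝ) (c P P' X : Matrix (Fin m) (Fin n) ℝ)
    (α : ℝ) (hp : ∀ i, 0 < p i) (hr : ∀ i, 0 < r i) (hv : ∀ j, 0 < v j)
    (hP : ∀ i j, 0 < P i j) (hP' : ∀ i j, P' i j = P i j * (p i / r i) * Real.exp (-(α * c i j)) * v j)
    (hX : ∀ i j, 0 ≤ X i j) (hXq : colSum X = q) :
    KLmat X P - KLmat X P' = ∑ i, rowSum X i * Real.log (p i / r i) - α * frob c X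
      + ∑ j, q j * Real.log (v j) + ∑ i, ∑ j, P i j - ∑ i, ∑ j, P' i j := by
  have h1 : ∑ j, q j * Real.log (v j) = ∑ i, ∑ j, X i j * Real.log (v j) := by
    rw [Finset.sum_comm]
    refine Finset.sum_congr rfl fun j _ => ?_
    rw [← hXq, ← Finset.sum_mul]; rfl
  have h2 : ∑ i, rowSum X i * Real.log (p i / r i) = ∑ i, ∑ j, X i j * Real.log (p i / r i) := by
    refine Finset.sum_congr rfl fun i _ => ?_
    rw [← Finset.sum_mul]; rfl
  rw [h1, h2]
  simp only [KLmat, frob, Finset.mul_sum, ← Finset.sum_sub_distrib, ← Finset.sum_add_distrib]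
  refine Finset.sum_congr rfl fun i _ => Finset.sum_congr rfl fun j _ => ?_
  rcases (hX i j).eq_or_lt with h | h
  · rw [← h]; ring
  · have hpr : 0 < p i / r i := div_pos (hp i) (hr i)
    have e1 : Real.log (P' i j) = Real.log (P i j) + Real.log (p i / r i) - α * c i j
        + Real.log (v j) := by
      rw [hP', Real.log_mul (by have := hP i j; positivity) (hv j).ne',
        Real.log_mul (by have := hP i j; positivity) (Real.exp_pos _).ne',
        Real.log_mul (hP i j).ne' hpr.ne', Real.log_exp]
      ring
    have hP'pos : 0 < P' i j := by
      rw [hP']; have := hP i j; have := hv j; positivity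
    rw [Real.log_div h.ne' (hP i j).ne', Real.log_div h.ne' hP'pos.ne', e1]
    ring

lemma KLvec_shift {m : ℕ} (x p r : Fin m → ℝ) (hx : ∀ i, 0 ≤ x i) (hp : ∀ i, 0 < p i)
    (hr : ∀ i, 0 < r i) :
    KLvec x p + ∑ i, x i * Real.log (p i / r i) = KLvec x r + ∑ i, p i - ∑ i, r i := by
  simp only [KLvec, ← Finset.sum_sub_distrib, ← Finset.sum_add_distrib]
  refine Finset.sum_congr rfl fun i _ => ?_
  rcases (hx i).eq_or_lt with h | h
  · rw [← h]; ring
  · rw [Real.log_div h.ne' (hp i).ne', Real.log_div h.ne' (hr i).ne',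
      Real.log_div (hp i).ne' (hr i).ne']
    ring

/-- One mirror descent step. -/
lemma mirror_step {m n : ℕ} (p : Fin m → ℝ) (q v : Fin n → ℝ)
    (c P P' X : Matrix (Fin m) (Fin n) ℝ)
    (α : ℝ) (hn : 0 < n) (hp : ∀ i, 0 < p i) (hv : ∀ j, 0 < v j)
    (hP : ∀ i j, 0 < P i j)
    (hP' : ∀ i j, P' i j = P i j * (p i / rowSum P i) * Real.exp (-(α * c i j)) * v j)
    (hP'q : colSum P' = q)
    (hX : ∀ i j, 0 ≤ X i j) (hXq : colSum X = q) :
    KLvec (rowSum P') p + α * frob c P' ≤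
      KLvec (rowSum X) p + α * frob c X + KLmat X P - KLmat X P' := by
  have : Nonempty (Fin n) := ⟨⟨0, hn⟩⟩
  have hr : ∀ i, 0 < rowSum P i := fun i => Finset.sum_pos (fun j _ => hP i j) Finset.univ_nonempty
  have hP'pos : ∀ i j, 0 < P' i j := fun i j => by
    rw [hP']; have := hP i j; have := hv j; have := hp i; have := hr i; positivity
  have hr' : ∀ i, 0 < rowSum P' i :=
    fun i => Finset.sum_pos (fun j _ => hP'pos i j) Finset.univ_nonempty
  have hrX : ∀ i, 0 ≤ rowSum X i := fun i => Finset.sum_nonneg (fun j _ => hX i j)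
  have d1 := kl_diff p (rowSum P) q v c P P' X α hp hr hv hP hP' hX hXq
  have d2 := kl_diff p (rowSum P) q v c P P' P' α hp hr hv hP hP' (fun i j => (hP'pos i j).le) hP'q
  have z : KLmat P' P' = 0 := by
    refine Finset.sum_eq_zero fun i _ => Finset.sum_eq_zero fun j _ => ?_
    rw [div_self (hP'pos i j).ne']; simp
  have s1 := KLvec_shift (rowSum X) p (rowSum P) hrX hp hr
  have s2 := KLvec_shift (rowSum P') p (rowSum P) (fun i => (hr' i).le) hp hr
  have dp := KLvec_rowSum_le P' P hP'pos hP hr' hr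
  have nn := KLvec_nonneg (rowSum X) (rowSum P) hrX hr
  linarith

lemma sinkAB_pos {m n : ℕ} (hm : 0 < m) (hn : 0 < n) (p : Fin m → ℝ) (q : Fin n → ℝ)
    (c : Matrix (Fin m) (Fin n) ℝ) (β : ℕ → ℝ) (hp : ∀ i, 0 < p i) (hq : ∀ j, 0 < q j) (t : ℕ) :
    (∀ i, 0 < (sinkAB p q c β t).1 i) ∧ (∀ j, 0 < (sinkAB p q c β t).2 j) := by
  have : Nonempty (Fin n) := ⟨⟨0, hn⟩⟩
  have : Nonempty (Fin m) := ⟨⟨0, hm⟩⟩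
  induction t with
  | zero => simp [sinkAB]
  | succ t ih =>
    have h1 : ∀ i, 0 < (sinkAB p q c β (t + 1)).1 i := fun i =>
      div_pos (hp i) (Finset.sum_pos (fun j _ => mul_pos (Real.exp_pos _) (ih.2 j))
        Finset.univ_nonempty)
    exact ⟨h1, fun j => div_pos (hq j) (Finset.sum_pos
      (fun i _ => mul_pos (Real.exp_pos _) (h1 i)) Finset.univ_nonempty)⟩

lemma sinkPlan_colSum {m n : ℕ} (hm : 0 < m) (hn : 0 < n) (p : Fin m → ℝ) (q : Fin n → ℝ)
    (c : Matrix (Fin m) (Fin n) ℝ) (β : ℕ → ℝ) (hp : ∀ i, 0 < p i) (hq : ∀ j, 0 < q j) (t : ℕ) :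
    colSum (sinkPlan p q c β (t + 1)) = q := by
  have : Nonempty (Fin m) := ⟨⟨0, hm⟩⟩
  have h1 := (sinkAB_pos hm hn p q c β hp hq (t + 1)).1
  funext j
  have hS : 0 < ∑ i, gibbs c (β (t + 1)) i j * (sinkAB p q c β (t + 1)).1 i :=
    Finset.sum_pos (fun i _ => mul_pos (Real.exp_pos _) (h1 i)) Finset.univ_nonempty
  have e : (sinkAB p q c β (t + 1)).2 j
      = q j / ∑ i, gibbs c (β (t + 1)) i j * (sinkAB p q c β (t + 1)).1 i := rfl
  simp only [colSum, sinkPlan]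
  rw [← Finset.sum_mul, e]
  simp_rw [mul_comm _ (gibbs c (β (t + 1)) _ j)]
  field_simp

lemma sinkPlan_step {m n : ℕ} (hm : 0 < m) (hn : 0 < n) (p : Fin m → ℝ) (q : Fin n → ℝ)
    (c : Matrix (Fin m) (Fin n) ℝ) (β : ℕ → ℝ) (hp : ∀ i, 0 < p i) (hq : ∀ j, 0 < q j) (t : ℕ)
    (i : Fin m) (j : Fin n) :
    sinkPlan p q c β (t + 1) i j = sinkPlan p q c β t i j *
      (p i / rowSum (sinkPlan p q c β t) i) * Real.exp (-((β (t + 1) - β t) * c i j)) *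
      ((sinkAB p q c β (t + 1)).2 j / (sinkAB p q c β t).2 j) := by
  have : Nonempty (Fin n) := ⟨⟨0, hn⟩⟩
  obtain ⟨ha, hb⟩ := sinkAB_pos hm hn p q c β hp hq t
  have hS : 0 < ∑ j, gibbs c (β t) i j * (sinkAB p q c β t).2 j :=
    Finset.sum_pos (fun j _ => mul_pos (Real.exp_pos _) (hb j)) Finset.univ_nonempty
  have e : (sinkAB p q c β (t + 1)).1 i
      = p i / ∑ j, gibbs c (β t) i j * (sinkAB p q c β t).2 j := rfl
  have hr : rowSum (sinkPlan p q c β t) i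
      = (sinkAB p q c β t).1 i * ∑ j, gibbs c (β t) i j * (sinkAB p q c β t).2 j := by
    simp only [rowSum, sinkPlan, Finset.mul_sum, mul_assoc]
  have hg : gibbs c (β (t + 1)) i j
      = gibbs c (β t) i j * Real.exp (-((β (t + 1) - β t) * c i j)) := by
    simp only [gibbs]; rw [← Real.exp_add]; congr 1; ring
  rw [hr]
  simp only [sinkPlan]
  rw [e, hg]
  have := (ha i).ne'
  have := (hb j).ne'
  have := hS.ne'
  generalize (∑ j, gibbs c (β t) i j * (sinkAB p q c β t).2 j) = S at *
  field_simp

/-- Eq. (10): error decomposition for Annealed Sinkhorn.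
For `c ≥ 0` and a positive, nondecreasing, concave schedule, for any optimal plan `π*`:
`‖π_t𝟙 - p‖₁ ≤ 3√(α_t|⟨c,π*-π_t⟩|) + 3√(|(β_t-β_0)/t - α_t|·|⟨c,π*⟩|) + 3√(KL(π*|π_0)/t)`. -/
theorem annealed_sinkhorn_error_decomposition
    {m n : ℕ} (p : Fin m → ℝ) (q : Fin n → ℝ) (c : Matrix (Fin m) (Fin n) ℝ)
    (hp : p ∈ simplexPos m) (hq : q ∈ simplexPos n) (hc : ∀ i j, 0 ≤ c i j)
    (β : ℕ → ℝ) (hβpos : ∀ t, 0 < β t) (hβmono : Monotone β)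
    (hβconc : ∀ t, β (t + 2) - β (t + 1) ≤ β (t + 1) - β t)
    (πstar : Matrix (Fin m) (Fin n) ℝ) (hπstar : πstar ∈ Gamma p q)
    (hπstaropt : ∀ π' ∈ Gamma p q, frob c πstar ≤ frob c π') :
    ∀ t : ℕ, 1 ≤ t →
      l1vec (fun i => rowSum (sinkPlan p q c β t) i - p i) ≤
        3 * Real.sqrt ((β t - β (t - 1)) * |frob c (πstar - sinkPlan p q c β t)|) +
          3 * Real.sqrt (|(β t - β 0) / (t : ℝ) - (β t - β (t - 1))| * |frob c πstar|) +
            3 * Real.sqrt (KLmat πstar (sinkPlan p q c β 0) / (t : ℝ)) := by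
  obtain ⟨hp, sp⟩ := hp
  obtain ⟨hq, sq⟩ := hq
  obtain ⟨hX, hXp, hXq⟩ := hπstar
  have hm : 0 < m := by
    rcases Nat.eq_zero_or_pos m with h | h
    · subst h; simp at sp
    · exact h
  have hn : 0 < n := by
    rcases Nat.eq_zero_or_pos n with h | h
    · subst h; simp at sq
    · exact h
  have : Nonempty (Fin n) := ⟨⟨0, hn⟩⟩
  have hpos : ∀ t i j, 0 < sinkPlan p q c β t i j := fun t i j => by
    obtain ⟨ha, hb⟩ := sinkAB_pos hm hn p q c β hp hq t
    exact mul_pos (mul_pos (ha i) (Real.exp_pos _)) (hb j)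
  have hv : ∀ t j, 0 < (sinkAB p q c β (t + 1)).2 j / (sinkAB p q c β t).2 j := fun t j =>
    div_pos ((sinkAB_pos hm hn p q c β hp hq (t + 1)).2 j)
      ((sinkAB_pos hm hn p q c β hp hq t).2 j)
  have step := fun (t : ℕ) (X : Matrix (Fin m) (Fin n) ℝ) (hX : ∀ i j, 0 ≤ X i j)
      (hXq : colSum X = q) =>
    mirror_step p q _ c (sinkPlan p q c β t) (sinkPlan p q c β (t + 1)) X (β (t + 1) - β t) hn hp
      (hv t) (hpos t) (sinkPlan_step hm hn p q c β hp hq t)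
      (sinkPlan_colSum hm hn p q c β hp hq t) hX hXq
  have hKpp : KLvec p p = 0 := Finset.sum_eq_zero fun i _ => by
    rw [div_self (hp i).ne']; simp
  have hfr : ∀ t, 0 ≤ frob c (sinkPlan p q c β t) := fun t =>
    Finset.sum_nonneg fun i _ => Finset.sum_nonneg fun j _ => mul_nonneg (hc i j) (hpos t i j).le
  have mono : ∀ t, KLvec (rowSum (sinkPlan p q c β (t + 2))) p
      + (β (t + 2) - β (t + 1)) * frob c (sinkPlan p q c β (t + 2))
      ≤ KLvec (rowSum (sinkPlan p q c β (t + 1))) p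
      + (β (t + 1) - β t) * frob c (sinkPlan p q c β (t + 1)) := by
    intro t
    have h := step (t + 1) (sinkPlan p q c β (t + 1)) (fun i j => (hpos _ i j).le)
      (sinkPlan_colSum hm hn p q c β hp hq t)
    have z : KLmat (sinkPlan p q c β (t + 1)) (sinkPlan p q c β (t + 1)) = 0 := by
      refine Finset.sum_eq_zero fun i _ => Finset.sum_eq_zero fun j _ => ?_
      rw [div_self (hpos _ i j).ne']; simp
    have nn := KLmat_nonneg (sinkPlan p q c β (t + 1)) (sinkPlan p q c β (t + 1 + 1))
      (fun i j => (hpos _ i j).le) (hpos _)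
    have h2 := mul_le_mul_of_nonneg_right (hβconc t) (hfr (t + 1))
    have e : t + 1 + 1 = t + 2 := rfl
    rw [e] at h nn
    linarith
  have main : ∀ t : ℕ, ((t : ℝ) + 1) * (KLvec (rowSum (sinkPlan p q c β (t + 1))) p
      + (β (t + 1) - β t) * frob c (sinkPlan p q c β (t + 1)))
      ≤ (β (t + 1) - β 0) * frob c πstar + KLmat πstar (sinkPlan p q c β 0)
        - KLmat πstar (sinkPlan p q c β (t + 1)) := by
    intro t
    induction t with
    | zero =>
      have h := step 0 πstar hX hXq
      rw [hXp, hKpp] at h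
      simp only [Nat.cast_zero, zero_add] at h ⊢
      linarith
    | succ t ih =>
      have h := step (t + 1) πstar hX hXq
      rw [hXp, hKpp] at h
      have h2 := mul_le_mul_of_nonneg_left (mono t) (by positivity : (0 : ℝ) ≤ (t : ℝ) + 1)
      have e : t + 1 + 1 = t + 2 := rfl
      rw [e] at h ⊢
      push_cast
      linarith
  intro t ht
  obtain ⟨t, rfl⟩ : ∃ s, t = s + 1 := ⟨t - 1, by omega⟩
  have hM := main t
  rw [Nat.add_sub_cancel]
  have nn := KLmat_nonneg πstar (sinkPlan p q c β (t + 1)) hX (hpos _)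
  have nn0 := KLmat_nonneg πstar (sinkPlan p q c β 0) hX (hpos _)
  have hT : (0 : ℝ) < ((t + 1 : ℕ) : ℝ) := by positivity
  have hT' : ((t + 1 : ℕ) : ℝ) = (t : ℝ) + 1 := by push_cast; ring
  rw [← hT'] at hM
  generalize ((t + 1 : ℕ) : ℝ) = T at *
  have hfsub : frob c (πstar - sinkPlan p q c β (t + 1))
      = frob c πstar - frob c (sinkPlan p q c β (t + 1)) := by
    simp only [frob, Matrix.sub_apply, mul_sub, Finset.sum_sub_distrib]
  have hα : 0 ≤ β (t + 1) - β t := sub_nonneg.2 (hβmono (Nat.le_succ t))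
  have hpk := weak_pinsker (rowSum (sinkPlan p q c β (t + 1))) p
    (fun i => Finset.sum_pos (fun j _ => hpos _ i j) Finset.univ_nonempty) hp
    (by
      have := sinkPlan_colSum hm hn p q c β hp hq t
      calc _ = ∑ j, colSum (sinkPlan p q c β (t + 1)) j := Finset.sum_comm
        _ = 1 := by rw [this, sq]) sp
  have hA : (β (t + 1) - β t) * frob c (πstar - sinkPlan p q c β (t + 1))
      ≤ (β (t + 1) - β t) * |frob c (πstar - sinkPlan p q c β (t + 1))| :=
    mul_le_mul_of_nonneg_left (le_abs_self _) hα
  have hB : ((β (t + 1) - β 0) / T - (β (t + 1) - β t)) * frob c πstar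
      ≤ |(β (t + 1) - β 0) / T - (β (t + 1) - β t)| * |frob c πstar| := by
    rw [← abs_mul]; exact le_abs_self _
  have hA0 : 0 ≤ (β (t + 1) - β t) * |frob c (πstar - sinkPlan p q c β (t + 1))| :=
    mul_nonneg hα (abs_nonneg _)
  have hB0 : 0 ≤ |(β (t + 1) - β 0) / T - (β (t + 1) - β t)| * |frob c πstar| := by positivity
  have hC0 : 0 ≤ KLmat πstar (sinkPlan p q c β 0) / T := by positivity
  have hK : KLvec (rowSum (sinkPlan p q c β (t + 1))) p
      ≤ (β (t + 1) - β t) * frob c (πstar - sinkPlan p q c β (t + 1))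
        + ((β (t + 1) - β 0) / T - (β (t + 1) - β t)) * frob c πstar
        + KLmat πstar (sinkPlan p q c β 0) / T := by
    rw [hfsub]
    have h1 : KLvec (rowSum (sinkPlan p q c β (t + 1))) p
      + (β (t + 1) - β t) * frob c (sinkPlan p q c β (t + 1))
      ≤ ((β (t + 1) - β 0) * frob c πstar + KLmat πstar (sinkPlan p q c β 0)) / T := by
      rw [le_div_iff₀ hT]; linarith
    have h2 : ((β (t + 1) - β 0) * frob c πstar + KLmat πstar (sinkPlan p q c β 0)) / T
      = (β (t + 1) - β 0) / T * frob c πstar + KLmat πstar (sinkPlan p q c β 0) / T := by ring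
    rw [h2] at h1
    linarith
  generalize (β (t + 1) - β t) * |frob c (πstar - sinkPlan p q c β (t + 1))| = A at *
  generalize |(β (t + 1) - β 0) / T - (β (t + 1) - β t)| * |frob c πstar| = B at *
  generalize KLmat πstar (sinkPlan p q c β 0) / T = C at *
  have a0 := Real.sqrt_nonneg A
  have b0 := Real.sqrt_nonneg B
  have c0 := Real.sqrt_nonneg C
  have a1 := Real.sq_sqrt hA0
  have b1 := Real.sq_sqrt hB0
  have c1 := Real.sq_sqrt hC0
  refine le_of_abs_le (abs_le_of_sq_le_sq ?_ (by positivity))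
  refine hpk.trans ?_
  have k1 := mul_nonneg a0 b0
  have k2 := mul_nonneg a0 c0
  have k3 := mul_nonneg b0 c0
  nlinarith
end
end

section
/- Let p ∈ Δ*_m, q ∈ Δ*_n, c ∈ ℝ^{m×n}, and let α_t > 0, β_t > 0. Let π^onl_t be any minimizer over C_{β_t} ∩ Γ(*,q) of α_t⟨c,π⟩ + KL(π𝟙|p), and let π^reg_t be the unique minimizer over Γ(*,q) of F^reg_t(π) = ⟨c,π⟩ + (1/α_t) KL(π𝟙|p) + (1/β_t) KL(π|π^ref). Then ‖π^onl_t 𝟙 − π^reg_t 𝟙‖₁ ≤ √(2 α_t log(mn) / β_t). -/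
open Finset Filter Topology ENNReal

noncomputable section

lemma log_aux (x : ℝ) (hx : 0 < x) :
    3 * (x - 1) ^ 2 / (2 * (x * (x + 2))) + 1 - x⁻¹ ≤ Real.log x := by
  let f : ℝ → ℝ := fun x => Real.log x - (3 * (x - 1) ^ 2 / (2 * (x * (x + 2))) + 1 - x⁻¹)
  have hd : ∀ y : ℝ, 0 < y → HasDerivAt f ((y - 1) ^ 3 / (y ^ 2 * (y + 2) ^ 2)) y := by
    intro y hy
    have h1 : HasDerivAt (fun y : ℝ => 3 * (y - 1) ^ 2) (3 * (2 * (y - 1))) y := by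
      have := (((hasDerivAt_id y).sub_const 1).pow 2).const_mul 3
      simpa using this
    have h2 : HasDerivAt (fun y : ℝ => 2 * (y * (y + 2))) (2 * (2 * y + 2)) y := by
      have := ((hasDerivAt_id y).mul ((hasDerivAt_id y).add_const 2)).const_mul 2
      refine this.congr_deriv ?_
      simp only [id]
      ring
    have h := (Real.hasDerivAt_log hy.ne').sub
      (((h1.div h2 (by positivity)).add_const 1).sub (hasDerivAt_inv hy.ne'))
    refine h.congr_deriv ?_
    field_simp
    ring
  have h0 : f 1 = 0 := by simp [f]
  have key : 0 ≤ f x := by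
    rcases le_total 1 x with h | h
    · have hm : MonotoneOn f (Set.Ici 1) := by
        apply monotoneOn_of_deriv_nonneg (convex_Ici 1)
        · intro y hy
          exact (hd y (by have : (1:ℝ) ≤ y := hy; linarith)).continuousAt.continuousWithinAt
        · intro y hy
          rw [interior_Ici] at hy
          have : (1:ℝ) < y := hy
          exact (hd y (by linarith)).differentiableAt.differentiableWithinAt
        · intro y hy
          rw [interior_Ici] at hy
          have : (1:ℝ) < y := hy
          rw [(hd y (by linarith)).deriv]
          have : 0 < y - 1 := by linarith
          positivity
      have := hm (Set.mem_Ici.2 le_rfl) (Set.mem_Ici.2 h) h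
      linarith
    · have hm : AntitoneOn f (Set.Ioc 0 1) := by
        apply antitoneOn_of_deriv_nonpos (convex_Ioc 0 1)
        · intro y hy
          exact (hd y hy.1).continuousAt.continuousWithinAt
        · intro y hy
          rw [interior_Ioc] at hy
          exact (hd y hy.1).differentiableAt.differentiableWithinAt
        · intro y hy
          rw [interior_Ioc] at hy
          rw [(hd y hy.1).deriv]
          apply div_nonpos_of_nonpos_of_nonneg
          · have : y - 1 < 0 := by linarith [hy.2]
            exact (Odd.pow_neg (by decide) this).le
          · positivity
      have := hm (⟨hx, h⟩ : x ∈ Set.Ioc (0:ℝ) 1) (⟨one_pos, le_rfl⟩ : (1:ℝ) ∈ Set.Ioc (0:ℝ) 1) h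
      linarith
  simp only [f] at key
  linarith

lemma kl_term (a b : ℝ) (ha : 0 ≤ a) (hb : 0 < b) :
    (a - b) ^ 2 ≤ (2 * a + 4 * b) / 3 * (a * Real.log (a / b) - a + b) := by
  rcases ha.eq_or_lt with rfl | ha
  · simp; nlinarith [sq_nonneg b]
  · have h := log_aux (a / b) (by positivity)
    have h2 : (2 * a + 4 * b) / 3 * (a * (3 * (a / b - 1) ^ 2 / (2 * (a / b * (a / b + 2))) + 1 - (a / b)⁻¹) - a + b) = (a - b) ^ 2 := by
      field_simp
      ring
    rw [← h2]
    gcongr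

lemma pinsker {k : ℕ} (a b : Fin k → ℝ) (ha : ∀ i, 0 ≤ a i) (hb : ∀ i, 0 < b i)
    (sa : ∑ i, a i = 1) (sb : ∑ i, b i = 1) :
    (∑ i, |a i - b i|) ^ 2 ≤ 2 * ∑ i, (a i * Real.log (a i / b i) - a i + b i) := by
  have hnn : ∀ i, 0 ≤ a i * Real.log (a i / b i) - a i + b i := by
    intro i
    have h1 := kl_term (a i) (b i) (ha i) (hb i)
    have h2 : 0 < (2 * a i + 4 * b i) / 3 := by have := ha i; have := hb i; positivity
    by_contra h
    push Not at h
    nlinarith [sq_nonneg (a i - b i), mul_neg_of_pos_of_neg h2 h]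
  have hs : ∑ i, (2 * a i + 4 * b i) / 3 = 2 := by
    rw [← Finset.sum_div, Finset.sum_add_distrib, ← Finset.mul_sum, ← Finset.mul_sum, sa, sb]
    norm_num
  have hle : ∑ i, |a i - b i| ≤ ∑ i, √((2 * a i + 4 * b i) / 3) *
      √(a i * Real.log (a i / b i) - a i + b i) := by
    apply Finset.sum_le_sum
    intro i _
    rw [← Real.sqrt_mul (by have := ha i; have := hb i; positivity)]
    exact Real.abs_le_sqrt (kl_term _ _ (ha i) (hb i))
  have := Real.sum_sqrt_mul_sqrt_le (f := fun i => (2 * a i + 4 * b i) / 3)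
    (g := fun i => a i * Real.log (a i / b i) - a i + b i) Finset.univ
    (fun i => by have := ha i; have := hb i; positivity) hnn
  rw [hs] at this
  have h3 := hle.trans this
  calc _ ≤ (√2 * √(∑ i, (a i * Real.log (a i / b i) - a i + b i))) ^ 2 := by
        gcongr
    _ = _ := by
        rw [mul_pow, Real.sq_sqrt (by norm_num), Real.sq_sqrt (Finset.sum_nonneg fun i _ => hnn i)]

lemma klt_eq (a p : ℝ) (hp : 0 < p) :
    a * Real.log (a / p) - a + p = a * Real.log a - a * (Real.log p + 1) + p := by
  rcases eq_or_ne a 0 with rfl | ha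
  · simp
  · rw [Real.log_div ha hp.ne']; ring

lemma klt_convex (x y p t : ℝ) (hp : 0 < p) (hx : 0 ≤ x) (hy : 0 ≤ y) (t0 : 0 ≤ t) (t1 : t ≤ 1) :
    ((1 - t) * x + t * y) * Real.log (((1 - t) * x + t * y) / p) - ((1 - t) * x + t * y) + p ≤
      (1 - t) * (x * Real.log (x / p) - x + p) + t * (y * Real.log (y / p) - y + p) := by
  rw [klt_eq _ p hp, klt_eq _ p hp, klt_eq _ p hp]
  have := Real.convexOn_mul_log.2 (Set.mem_Ici.2 hx) (Set.mem_Ici.2 hy) (sub_nonneg.2 t1) t0 (by ring)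
  simp only [smul_eq_mul] at this
  linarith

lemma klt_zero (y p t : ℝ) (hp : 0 < p) (hy : 0 < y) (t0 : 0 < t) :
    ((1 - t) * 0 + t * y) * Real.log (((1 - t) * 0 + t * y) / p) - ((1 - t) * 0 + t * y) + p =
      (1 - t) * (0 * Real.log (0 / p) - 0 + p) + t * (y * Real.log (y / p) - y + p)
        + t * y * Real.log t := by
  rw [klt_eq _ p hp, klt_eq _ p hp, klt_eq _ p hp]
  simp only [mul_zero, zero_add, zero_mul]
  rw [Real.log_mul t0.ne' hy.ne']
  ring

lemma klt_deriv (x d p : ℝ) (hp : 0 < p) (hx : 0 < x) :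
    HasDerivAt (fun s : ℝ => (x + s * d) * Real.log ((x + s * d) / p) - (x + s * d) + p)
      (d * Real.log (x / p)) 0 := by
  have h1 : HasDerivAt (fun s : ℝ => x + s * d) d 0 := by
    simpa using ((hasDerivAt_id (0:ℝ)).mul_const d).const_add x
  have h2 : HasDerivAt (fun s : ℝ => Real.log ((x + s * d) / p)) (d / p / (x / p)) 0 := by
    have := (h1.div_const p).log (by simp; exact ⟨hx.ne', hp.ne'⟩)
    simpa using this
  have h := ((h1.mul h2).sub h1).add_const p
  refine h.congr_deriv ?_
  simp only [zero_mul, add_zero]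
  field_simp
  ring

lemma three_point (a b p : ℝ) (hp : 0 < p) (hb : 0 < b) :
    a * Real.log (a / p) - a + p =
      (b * Real.log (b / p) - b + p) + (a - b) * Real.log (b / p)
        + (a * Real.log (a / b) - a + b) := by
  rw [klt_eq _ p hp, klt_eq _ p hp, klt_eq _ b hb, Real.log_div hb.ne' hp.ne']
  ring

lemma klt_nonneg (a b : ℝ) (ha : 0 ≤ a) (hb : 0 < b) : 0 ≤ a * Real.log (a / b) - a + b := by
  have h1 := kl_term a b ha hb
  have h2 : 0 < (2 * a + 4 * b) / 3 := by positivity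
  by_contra h
  push Not at h
  nlinarith [sq_nonneg (a - b), mul_neg_of_pos_of_neg h2 h]

lemma piRef_pos {m n : ℕ} (i : Fin m) (j : Fin n) : 0 < piRef m n i j := by
  have h1 : 0 < (m : ℝ) := by exact_mod_cast i.pos
  have h2 : 0 < (n : ℝ) := by exact_mod_cast j.pos
  unfold piRef
  positivity

lemma Freg_segment {m n : ℕ} (c : Matrix (Fin m) (Fin n) ℝ) (p : Fin m → ℝ) (hp : ∀ i, 0 < p i)
    (α β : ℝ) (hα : 0 < α) (hβ : 0 < β) (P Q : Matrix (Fin m) (Fin n) ℝ)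
    (hP : ∀ i j, 0 ≤ P i j) (hQ : ∀ i j, 0 < Q i j) (i0 : Fin m) (j0 : Fin n) (h0 : P i0 j0 = 0)
    (t : ℝ) (t0 : 0 < t) (t1 : t ≤ 1) :
    Freg c p α β (fun i j => (1 - t) * P i j + t * Q i j) ≤
      (1 - t) * Freg c p α β P + t * Freg c p α β Q + β⁻¹ * (t * Q i0 j0 * Real.log t) := by
  have e1 : frob c (fun i j => (1 - t) * P i j + t * Q i j) =
      (1 - t) * frob c P + t * frob c Q := by
    simp only [frob, Finset.mul_sum, ← Finset.sum_add_distrib]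
    refine Finset.sum_congr rfl fun i _ => Finset.sum_congr rfl fun j _ => ?_
    ring
  have e2 : KLvec (rowSum (fun i j => (1 - t) * P i j + t * Q i j)) p ≤
      (1 - t) * KLvec (rowSum P) p + t * KLvec (rowSum Q) p := by
    have : rowSum (fun i j => (1 - t) * P i j + t * Q i j) =
        fun i => (1 - t) * rowSum P i + t * rowSum Q i := by
      funext i
      simp only [rowSum, Finset.mul_sum, ← Finset.sum_add_distrib]
    rw [this]
    simp only [KLvec]
    rw [Finset.mul_sum, Finset.mul_sum, ← Finset.sum_add_distrib]
    refine Finset.sum_le_sum fun i _ => ?_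
    exact klt_convex _ _ _ _ (hp i) (Finset.sum_nonneg fun j _ => hP i j)
      (Finset.sum_nonneg fun j _ => (hQ i j).le) t0.le t1
  have e3 : KLmat (fun i j => (1 - t) * P i j + t * Q i j) (piRef m n) ≤
      (1 - t) * KLmat P (piRef m n) + t * KLmat Q (piRef m n) + t * Q i0 j0 * Real.log t := by
    have hs : t * Q i0 j0 * Real.log t =
        ∑ i : Fin m, ∑ j : Fin n,
          (if i = i0 then (if j = j0 then t * Q i0 j0 * Real.log t else 0) else 0) := by
      rw [Finset.sum_eq_single i0]
      · simp
      · intro b _ hb; simp [hb]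
      · simp
    rw [hs]
    simp only [KLmat, Finset.mul_sum, ← Finset.sum_add_distrib]
    refine Finset.sum_le_sum fun i _ => Finset.sum_le_sum fun j _ => ?_
    by_cases hij : i = i0 ∧ j = j0
    · obtain ⟨rfl, rfl⟩ := hij
      have := klt_zero (Q i j) (piRef m n i j) t (piRef_pos i j) (hQ i j) t0
      simp only [if_true]
      rw [h0]
      exact this.le
    · have : (if i = i0 then (if j = j0 then t * Q i0 j0 * Real.log t else 0) else 0) = 0 := by
        by_cases h1 : i = i0 <;> by_cases h2 : j = j0 <;> simp_all
      rw [this, add_zero]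
      exact klt_convex _ _ _ _ (piRef_pos i j) (hP i j) (hQ i j).le t0.le t1
  unfold Freg
  rw [e1]
  have f2 := mul_le_mul_of_nonneg_left e2 (inv_pos.2 hα).le
  have f3 := mul_le_mul_of_nonneg_left e3 (inv_pos.2 hβ).le
  linarith

lemma reg_pos {m n : ℕ} (p : Fin m → ℝ) (q : Fin n → ℝ) (c : Matrix (Fin m) (Fin n) ℝ)
    (hp : ∀ i, 0 < p i) (hq : ∀ j, 0 < q j) (α β : ℝ) (hα : 0 < α) (hβ : 0 < β)
    (P : Matrix (Fin m) (Fin n) ℝ) (hPm : P ∈ GammaStar q)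
    (hopt : ∀ π' ∈ GammaStar (m := m) q, Freg c p α β P ≤ Freg c p α β π') :
    ∀ i j, 0 < P i j := by
  intro i0 j0
  by_contra hneg
  have h0 : P i0 j0 = 0 := le_antisymm (not_lt.1 hneg) (hPm.1 i0 j0)
  have hm : 0 < (m : ℝ) := by exact_mod_cast i0.pos
  let Q : Matrix (Fin m) (Fin n) ℝ := fun i j => q j / m
  have hQ : ∀ i j, 0 < Q i j := fun i j => div_pos (hq j) hm
  have hQc : ∀ j, ∑ i, Q i j = q j := by
    intro j
    simp [Q]
    field_simp
  have hPc : ∀ j, ∑ i, P i j = q j := fun j => congrFun hPm.2 j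
  have key : ∀ t : ℝ, 0 < t → t ≤ 1 →
      0 ≤ (Freg c p α β Q - Freg c p α β P) + β⁻¹ * (Q i0 j0 * Real.log t) := by
    intro t t0 t1
    have h1 := Freg_segment c p hp α β hα hβ P Q hPm.1 hQ i0 j0 h0 t t0 t1
    have h2 := hopt (fun i j => (1 - t) * P i j + t * Q i j) ⟨fun i j => by
        have := hPm.1 i j
        have := hQ i j
        have : 0 ≤ 1 - t := by linarith
        positivity, by
        funext j
        simp only [colSum, Finset.sum_add_distrib, ← Finset.mul_sum, hQc, hPc]
        ring⟩
    have h3 : 0 ≤ t * ((Freg c p α β Q - Freg c p α β P) + β⁻¹ * (Q i0 j0 * Real.log t)) := by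
      linarith
    exact nonneg_of_mul_nonneg_right h3 t0
  set D := Freg c p α β Q - Freg c p α β P
  have hw := hQ i0 j0
  have := key (Real.exp (-((|D| + 1) * β / Q i0 j0))) (Real.exp_pos _)
    (Real.exp_le_one_iff.2 (by
      have : 0 ≤ (|D| + 1) * β / Q i0 j0 := by positivity
      linarith))
  rw [Real.log_exp] at this
  have e : β⁻¹ * (Q i0 j0 * -((|D| + 1) * β / Q i0 j0)) = -(|D| + 1) := by
    field_simp
  rw [e] at this
  linarith [le_abs_self D]

lemma reg_stationary {m n : ℕ} (p : Fin m → ℝ) (q : Fin n → ℝ) (c : Matrix (Fin m) (Fin n) ℝ)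
    (hp : ∀ i, 0 < p i) (α β : ℝ)
    (P : Matrix (Fin m) (Fin n) ℝ) (hPm : P ∈ GammaStar q) (hPpos : ∀ i j, 0 < P i j)
    (hr : ∀ i, 0 < rowSum P i)
    (hopt : ∀ π' ∈ GammaStar (m := m) q, Freg c p α β P ≤ Freg c p α β π')
    (d : Matrix (Fin m) (Fin n) ℝ) (hd : ∀ j, ∑ i, d i j = 0) :
    frob c d + α⁻¹ * (∑ i, rowSum d i * Real.log (rowSum P i / p i))
      + β⁻¹ * (∑ i, ∑ j, d i j * Real.log (P i j / piRef m n i j)) = 0 := by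
  let X : ℝ → Matrix (Fin m) (Fin n) ℝ := fun s i j => P i j + s * d i j
  have hX0 : X 0 = P := by
    funext i j
    simp [X]
  have hmin : IsLocalMin (fun s => Freg c p α β (X s)) 0 := by
    have hev : ∀ᶠ s in 𝓝 (0 : ℝ), ∀ i j, 0 < X s i j := by
      rw [Filter.eventually_all]
      intro i
      rw [Filter.eventually_all]
      intro j
      have hc : Continuous (fun s : ℝ => X s i j) := by
        simp only [X]
        fun_prop
      have : 0 < X 0 i j := by rw [hX0]; exact hPpos i j
      exact hc.continuousAt.eventually (lt_mem_nhds this)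
    filter_upwards [hev] with s hs
    simp only [hX0]
    refine hopt _ ⟨fun i j => (hs i j).le, ?_⟩
    funext j
    simp only [colSum, X, Finset.sum_add_distrib, ← Finset.mul_sum, hd, mul_zero, add_zero]
    exact congrFun hPm.2 j
  have d1 : HasDerivAt (fun s => frob c (X s)) (frob c d) 0 := by
    unfold frob
    refine HasDerivAt.fun_sum fun i _ => HasDerivAt.fun_sum fun j _ => ?_
    simpa [X] using (((hasDerivAt_id (0:ℝ)).mul_const (d i j)).const_add (P i j)).const_mul (c i j)
  have d2 : HasDerivAt (fun s => KLvec (rowSum (X s)) p)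
      (∑ i, rowSum d i * Real.log (rowSum P i / p i)) 0 := by
    unfold KLvec
    refine HasDerivAt.fun_sum fun i _ => ?_
    have : ∀ s, rowSum (X s) i = rowSum P i + s * rowSum d i := by
      intro s
      simp only [rowSum, X, Finset.sum_add_distrib, Finset.mul_sum]
    simp only [this]
    exact klt_deriv _ _ _ (hp i) (hr i)
  have d3 : HasDerivAt (fun s => KLmat (X s) (piRef m n))
      (∑ i, ∑ j, d i j * Real.log (P i j / piRef m n i j)) 0 := by
    unfold KLmat
    refine HasDerivAt.fun_sum fun i _ => HasDerivAt.fun_sum fun j _ => ?_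
    exact klt_deriv _ _ _ (piRef_pos i j) (hPpos i j)
  have hF := (d1.add (d2.const_mul α⁻¹)).add (d3.const_mul β⁻¹)
  exact hmin.hasDerivAt_eq_zero hF

lemma reg_scaling {m n : ℕ} (p : Fin m → ℝ) (c : Matrix (Fin m) (Fin n) ℝ)
    (α β : ℝ) (hβ : 0 < β) (i0 : Fin m)
    (P : Matrix (Fin m) (Fin n) ℝ) (hPpos : ∀ i j, 0 < P i j)
    (hst : ∀ d : Matrix (Fin m) (Fin n) ℝ, (∀ j, ∑ i, d i j = 0) →
      frob c d + α⁻¹ * (∑ i, rowSum d i * Real.log (rowSum P i / p i))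
      + β⁻¹ * (∑ i, ∑ j, d i j * Real.log (P i j / piRef m n i j)) = 0) :
    P ∈ scalingSet c β := by
  let g : Fin m → ℝ := fun i => α⁻¹ * Real.log (rowSum P i / p i)
  refine ⟨fun i => Real.exp (-(β * g i)),
    fun j => P i0 j * Real.exp (β * c i0 j) * Real.exp (β * g i0), fun i => (Real.exp_pos _).le,
    fun j => by have := hPpos i0 j; positivity, ?_⟩
  funext i j
  let d : Matrix (Fin m) (Fin n) ℝ := fun a b =>
    (if b = j then 1 else 0) * ((if a = i then 1 else 0) - (if a = i0 then 1 else 0))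
  have h := hst d (by
    intro b
    simp only [d, ← Finset.mul_sum, Finset.sum_sub_distrib]
    simp)
  have hrow : ∀ a, rowSum d a = (if a = i then 1 else 0) - (if a = i0 then 1 else 0) := by
    intro a
    simp only [rowSum, d, ← Finset.sum_mul]
    simp
  have hsum : ∀ f : Matrix (Fin m) (Fin n) ℝ, ∑ a, ∑ b, d a b * f a b = f i j - f i0 j := by
    intro f
    have : ∀ a, ∑ b, d a b * f a b =
        ((if a = i then 1 else 0) - (if a = i0 then 1 else 0)) * f a j := by
      intro a
      rw [Finset.sum_eq_single j]
      · simp [d]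
      · intro b _ hb; simp [d, hb]
      · simp
    simp only [this, sub_mul, Finset.sum_sub_distrib]
    simp
  have hfrob : frob c d = c i j - c i0 j := by
    rw [← hsum c]
    unfold frob
    simp only [mul_comm]
  rw [hfrob, hsum (fun a b => Real.log (P a b / piRef m n a b))] at h
  simp only [hrow, sub_mul, Finset.sum_sub_distrib] at h
  simp only [ite_mul, one_mul, zero_mul, Finset.sum_ite_eq', Finset.mem_univ, if_true] at h
  rw [Real.log_div (hPpos i j).ne' (piRef_pos i j).ne',
    Real.log_div (hPpos i0 j).ne' (piRef_pos i0 j).ne'] at h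
  have href : piRef m n i j = piRef m n i0 j := rfl
  rw [href] at h
  have hlog : Real.log (P i j) = -(β * g i) + -(β * c i j) + (Real.log (P i0 j) + β * c i0 j + β * g i0) := by
    simp only [g]
    have h' : β * (c i j - c i0 j +
        α⁻¹ * (Real.log (rowSum P i / p i) - Real.log (rowSum P i0 / p i0))) +
        (Real.log (P i j) - Real.log (P i0 j)) = 0 := by
      have := congrArg (fun z => β * z) h
      simp only [mul_zero] at this
      rw [mul_add β (_ + _), ← mul_assoc β β⁻¹, mul_inv_cancel₀ hβ.ne'] at this
      linarith
    linarith
  rw [← Real.exp_log (hPpos i j), hlog]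
  simp only [Real.exp_add]
  rw [Real.exp_log (hPpos i0 j)]

/-- Proposition 1: online vs. regularization paths, ℓ¹ bound.
`‖π^onl_t 𝟙 - π^reg_t 𝟙‖₁ ≤ √(2 α_t log(mn) / β_t)`. -/
theorem online_vs_regularization_path_l1
    {m n : ℕ} (p : Fin m → ℝ) (q : Fin n → ℝ) (c : Matrix (Fin m) (Fin n) ℝ)
    (hp : p ∈ simplexPos m) (hq : q ∈ simplexPos n)
    (α β : ℝ) (hα : 0 < α) (hβ : 0 < β)
    (πonl : Matrix (Fin m) (Fin n) ℝ)
    (hπonlmem : πonl ∈ scalingSet c β ∩ GammaStar q)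
    (hπonlopt : ∀ π' ∈ scalingSet c β ∩ GammaStar q,
      α * frob c πonl + KLvec (rowSum πonl) p ≤ α * frob c π' + KLvec (rowSum π') p)
    (πreg : Matrix (Fin m) (Fin n) ℝ)
    (hπregmem : πreg ∈ GammaStar q)
    (hπregopt : ∀ π' ∈ GammaStar (m := m) q, Freg c p α β πreg ≤ Freg c p α β π') :
    l1vec (fun i => rowSum πonl i - rowSum πreg i) ≤
      Real.sqrt (2 * α * Real.log (m * n) / β) := by
  have hm : 0 < m := by
    rcases Nat.eq_zero_or_pos m with rfl | h
    · have := hp.2; simp at this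
    · exact h
  have hn : 0 < n := by
    rcases Nat.eq_zero_or_pos n with rfl | h
    · have := hq.2; simp at this
    · exact h
  have hmR : (1 : ℝ) ≤ m := by exact_mod_cast hm
  have hnR : (1 : ℝ) ≤ n := by exact_mod_cast hn
  have hpos := reg_pos p q c hp.1 hq.1 α β hα hβ πreg hπregmem hπregopt
  have hr : ∀ i, 0 < rowSum πreg i := fun i =>
    Finset.sum_pos (fun j _ => hpos i j) ⟨⟨0, hn⟩, Finset.mem_univ _⟩
  have hst := reg_stationary p q c hp.1 α β πreg hπregmem hpos hr hπregopt
  have hsc := reg_scaling p c α β hβ ⟨0, hm⟩ πreg hpos hst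
  have hG := hπonlopt πreg ⟨hsc, hπregmem⟩
  have honl := hπonlmem.2
  have hd := hst (fun i j => πonl i j - πreg i j) (by
    intro j
    rw [Finset.sum_sub_distrib]
    have h1 : ∑ i, πonl i j = q j := congrFun honl.2 j
    have h2 : ∑ i, πreg i j = q j := congrFun hπregmem.2 j
    rw [h1, h2, sub_self])
  have mass : ∀ π : Matrix (Fin m) (Fin n) ℝ, π ∈ GammaStar q → ∑ i, ∑ j, π i j = 1 := by
    intro π hπ
    refine (Finset.sum_comm (f := fun i j => π i j)).trans ?_
    rw [← hq.2]
    exact Finset.sum_congr rfl fun j _ => congrFun hπ.2 j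
  have hrd : ∀ i, rowSum (fun i j => πonl i j - πreg i j) i = rowSum πonl i - rowSum πreg i := by
    intro i
    simp only [rowSum, Finset.sum_sub_distrib]
  simp only [hrd] at hd
  have hfd : frob c (fun i j => πonl i j - πreg i j) = frob c πonl - frob c πreg := by
    simp only [frob, mul_sub, Finset.sum_sub_distrib]
  rw [hfd] at hd
  have t1 : KLvec (rowSum πonl) p = KLvec (rowSum πreg) p
      + ∑ i, (rowSum πonl i - rowSum πreg i) * Real.log (rowSum πreg i / p i)
      + KLvec (rowSum πonl) (rowSum πreg) := by
    simp only [KLvec, ← Finset.sum_add_distrib]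
    exact Finset.sum_congr rfl fun i _ => three_point _ _ _ (hp.1 i) (hr i)
  have t2 : KLmat πonl (piRef m n) = KLmat πreg (piRef m n)
      + ∑ i, ∑ j, (πonl i j - πreg i j) * Real.log (πreg i j / piRef m n i j)
      + KLmat πonl πreg := by
    simp only [KLmat, ← Finset.sum_add_distrib]
    exact Finset.sum_congr rfl fun i _ => Finset.sum_congr rfl fun j _ =>
      three_point _ _ _ (piRef_pos i j) (hpos i j)
  have n1 : 0 ≤ KLmat πonl πreg :=
    Finset.sum_nonneg fun i _ => Finset.sum_nonneg fun j _ => klt_nonneg _ _ (honl.1 i j) (hpos i j)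
  have n2 : 0 ≤ KLmat πreg (piRef m n) :=
    Finset.sum_nonneg fun i _ => Finset.sum_nonneg fun j _ =>
      klt_nonneg _ _ (hpos i j).le (piRef_pos i j)
  have n3 : KLmat πonl (piRef m n) ≤ Real.log (m * n) := by
    have hle : ∀ i j, πonl i j ≤ 1 := by
      intro i j
      rw [← mass πonl honl]
      calc πonl i j ≤ ∑ j, πonl i j :=
            Finset.single_le_sum (f := fun j => πonl i j) (fun j _ => honl.1 i j) (Finset.mem_univ j)
        _ ≤ _ := Finset.single_le_sum (f := fun i => ∑ j, πonl i j)
            (fun i _ => Finset.sum_nonneg fun j _ => honl.1 i j) (Finset.mem_univ i)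
    have hb : KLmat πonl (piRef m n) ≤
        ∑ i, ∑ j, (πonl i j * (Real.log (m * n) - 1) + piRef m n i j) := by
      refine Finset.sum_le_sum fun i _ => Finset.sum_le_sum fun j _ => ?_
      rw [klt_eq _ _ (piRef_pos i j)]
      have h1 : Real.log (piRef m n i j) = - Real.log (m * n) := by
        simp only [piRef, one_div, Real.log_inv]
      rw [h1]
      have := mul_nonpos_of_nonneg_of_nonpos (honl.1 i j)
        (Real.log_nonpos (honl.1 i j) (hle i j))
      linarith
    refine hb.trans (le_of_eq ?_)
    simp only [Finset.sum_add_distrib, ← Finset.sum_mul, mass πonl honl]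
    simp only [piRef, Finset.sum_const, Finset.card_univ, Fintype.card_fin, nsmul_eq_mul]
    field_simp
    ring
  have hkl : KLvec (rowSum πonl) (rowSum πreg) ≤ α * (Real.log (m * n) / β) := by
    have hb : β⁻¹ * (∑ i, ∑ j, (πonl i j - πreg i j) * Real.log (πreg i j / piRef m n i j)) ≤
        β⁻¹ * Real.log (m * n) := by
      apply mul_le_mul_of_nonneg_left _ (inv_pos.2 hβ).le
      linarith
    have hA := congrArg (fun z => α * z) hd
    simp only [mul_zero] at hA
    rw [mul_add, mul_add, ← mul_assoc α α⁻¹, mul_inv_cancel₀ hα.ne'] at hA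
    have hB := mul_le_mul_of_nonneg_left hb hα.le
    rw [div_eq_inv_mul]
    linarith
  have hpin := pinsker (rowSum πonl) (rowSum πreg)
    (fun i => Finset.sum_nonneg fun j _ => honl.1 i j) hr (mass πonl honl) (mass πreg hπregmem)
  apply Real.le_sqrt_of_sq_le
  unfold l1vec
  refine hpin.trans ?_
  have e : 2 * α * Real.log (m * n) / β = 2 * (α * (Real.log (m * n) / β)) := by ring
  rw [e]
  exact mul_le_mul_of_nonneg_left hkl (by norm_num)

end
end

section
/- Let p ∈ Δ*_m, q ∈ Δ*_n, c ∈ ℝ^{m×n}, and let α > 0, β > 0. Let π^onl be any minimizer over C_β ∩ Γ(*,q) of α⟨c,π⟩ + KL(π𝟙|p), and let π^reg be the unique minimizer over Γ(*,q) of F^reg(π) = ⟨c,π⟩ + (1/α) KL(π𝟙|p) + (1/β) KL(π|π^ref). Then KL(π^onl 𝟙 | π^reg 𝟙) ≤ (α/β) log(mn). -/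
open Finset Filter Topology ENNReal

noncomputable section

lemma aux_pt_le (a a' b : ℝ) (ha : 0 ≤ a) (h : 0 < a' ∨ a' = a) (hb : 0 < b) :
    (a' * Real.log (a' / b) - a' + b) - (a * Real.log (a / b) - a + b)
      ≤ Real.log (a' / b) * (a' - a) := by
  rcases h with h | h
  · rcases ha.eq_or_lt with ha | ha
    · subst ha; simp; nlinarith
    · have h1 := Real.log_le_sub_one_of_pos (div_pos h ha)
      rw [Real.log_div h.ne' ha.ne'] at h1
      rw [Real.log_div h.ne' hb.ne', Real.log_div ha.ne' hb.ne']
      have h2 := mul_le_mul_of_nonneg_left h1 ha.le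
      have h3 : a * (a' / a - 1) = a' - a := by field_simp
      rw [h3] at h2
      nlinarith
  · subst h; simp

lemma aux_pt_eq (s x b : ℝ) (hs : 0 ≤ s) (hx : 0 < x) (hb : 0 < b) :
    (s * Real.log (s / b) - s + b) - (x * Real.log (x / b) - x + b)
      = Real.log (x / b) * (s - x) + (s * Real.log (s / x) - s + x) := by
  rcases hs.eq_or_lt with h | h
  · subst h; simp; ring
  · rw [Real.log_div h.ne' hb.ne', Real.log_div hx.ne' hb.ne', Real.log_div h.ne' hx.ne']
    ring

lemma aux_pt_nonneg (s b : ℝ) (hs : 0 ≤ s) (hb : 0 < b) :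
    0 ≤ s * Real.log (s / b) - s + b := by
  have := aux_pt_le s b b hs (Or.inl hb) hb
  simp [div_self hb.ne'] at this
  linarith

/-- Gradient of the regularized objective. -/
def gradF {m n : ℕ} (c : Matrix (Fin m) (Fin n) ℝ) (p : Fin m → ℝ) (α β : ℝ)
    (π : Matrix (Fin m) (Fin n) ℝ) (i : Fin m) (j : Fin n) : ℝ :=
  c i j + α⁻¹ * Real.log (rowSum π i / p i) + β⁻¹ * Real.log (π i j / piRef m n i j)

lemma sum_gradF {m n : ℕ} (c : Matrix (Fin m) (Fin n) ℝ) (p : Fin m → ℝ) (α β : ℝ)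
    (π σ τ : Matrix (Fin m) (Fin n) ℝ) :
    ∑ i, ∑ j, gradF c p α β π i j * (σ i j - τ i j) = (frob c σ - frob c τ)
      + α⁻¹ * ∑ i, Real.log (rowSum π i / p i) * (rowSum σ i - rowSum τ i)
      + β⁻¹ * ∑ i, ∑ j, Real.log (π i j / piRef m n i j) * (σ i j - τ i j) := by
  simp only [gradF, frob, rowSum, ← Finset.sum_sub_distrib, Finset.mul_sum,
    ← Finset.sum_add_distrib]
  refine Finset.sum_congr rfl fun i _ => Finset.sum_congr rfl fun j _ => ?_
  ring

lemma Freg_sub_le {m n : ℕ} (c : Matrix (Fin m) (Fin n) ℝ) (p : Fin m → ℝ) (α β : ℝ)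
    (hp : ∀ i, 0 < p i) (hα : 0 < α) (hβ : 0 < β)
    (π σ : Matrix (Fin m) (Fin n) ℝ) (hπ : ∀ i j, 0 ≤ π i j) (hσ : ∀ i j, 0 ≤ σ i j)
    (h : ∀ i j, 0 < σ i j ∨ σ i j = π i j) :
    Freg c p α β σ - Freg c p α β π ≤ ∑ i, ∑ j, gradF c p α β σ i j * (σ i j - π i j) := by
  rw [sum_gradF]
  have h1 : KLvec (rowSum σ) p - KLvec (rowSum π) p ≤
      ∑ i, Real.log (rowSum σ i / p i) * (rowSum σ i - rowSum π i) := by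
    unfold KLvec
    rw [← Finset.sum_sub_distrib]
    refine Finset.sum_le_sum fun i _ => aux_pt_le _ _ _ (Finset.sum_nonneg fun j _ => hπ i j) ?_ (hp i)
    by_cases hh : ∃ j, 0 < σ i j
    · obtain ⟨j, hj⟩ := hh
      exact Or.inl (Finset.sum_pos' (fun j _ => hσ i j) ⟨j, Finset.mem_univ _, hj⟩)
    · push Not at hh
      exact Or.inr (Finset.sum_congr rfl fun j _ => (h i j).resolve_left (hh j).not_gt)
  have h2 : KLmat σ (piRef m n) - KLmat π (piRef m n) ≤
      ∑ i, ∑ j, Real.log (σ i j / piRef m n i j) * (σ i j - π i j) := by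
    unfold KLmat
    simp only [← Finset.sum_sub_distrib]
    exact Finset.sum_le_sum fun i _ => Finset.sum_le_sum fun j _ =>
      aux_pt_le _ _ _ (hπ i j) (h i j) (piRef_pos i j)
  have h3 := mul_le_mul_of_nonneg_left h1 (inv_pos.2 hα).le
  have h4 := mul_le_mul_of_nonneg_left h2 (inv_pos.2 hβ).le
  unfold Freg
  linarith

lemma Freg_sub_eq {m n : ℕ} (c : Matrix (Fin m) (Fin n) ℝ) (p : Fin m → ℝ) (α β : ℝ)
    (hp : ∀ i, 0 < p i)
    (π σ : Matrix (Fin m) (Fin n) ℝ) (hπ : ∀ i j, 0 < π i j) (hσ : ∀ i j, 0 ≤ σ i j)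
    (hr : ∀ i, 0 < rowSum π i) :
    Freg c p α β σ - Freg c p α β π = ∑ i, ∑ j, gradF c p α β π i j * (σ i j - π i j)
      + α⁻¹ * KLvec (rowSum σ) (rowSum π) + β⁻¹ * KLmat σ π := by
  rw [sum_gradF]
  have h1 : KLvec (rowSum σ) p - KLvec (rowSum π) p =
      ∑ i, Real.log (rowSum π i / p i) * (rowSum σ i - rowSum π i)
        + KLvec (rowSum σ) (rowSum π) := by
    unfold KLvec
    rw [← Finset.sum_sub_distrib, ← Finset.sum_add_distrib]
    exact Finset.sum_congr rfl fun i _ =>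
      aux_pt_eq _ _ _ (Finset.sum_nonneg fun j _ => hσ i j) (hr i) (hp i)
  have h2 : KLmat σ (piRef m n) - KLmat π (piRef m n) =
      ∑ i, ∑ j, Real.log (π i j / piRef m n i j) * (σ i j - π i j) + KLmat σ π := by
    unfold KLmat
    simp only [← Finset.sum_sub_distrib, ← Finset.sum_add_distrib]
    exact Finset.sum_congr rfl fun i _ => Finset.sum_congr rfl fun j _ =>
      aux_pt_eq _ _ _ (hσ i j) (hπ i j) (piRef_pos i j)
  unfold Freg
  linear_combination α⁻¹ * h1 + β⁻¹ * h2

lemma opt_ineq {m n : ℕ} (p : Fin m → ℝ) (q : Fin n → ℝ) (c : Matrix (Fin m) (Fin n) ℝ)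
    (hp : ∀ i, 0 < p i) (α β : ℝ) (hα : 0 < α) (hβ : 0 < β)
    (π : Matrix (Fin m) (Fin n) ℝ) (hmem : π ∈ GammaStar q)
    (hopt : ∀ π' ∈ GammaStar (m := m) q, Freg c p α β π ≤ Freg c p α β π')
    (i k : Fin m) (hik : i ≠ k) (j : Fin n) (t : ℝ) (ht : 0 < t) (hty : t < π k j) :
    0 ≤ (c i j + α⁻¹ * Real.log ((rowSum π i + t) / p i)
          + β⁻¹ * Real.log ((π i j + t) / piRef m n i j))
      - (c k j + α⁻¹ * Real.log ((rowSum π k - t) / p k)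
          + β⁻¹ * Real.log ((π k j - t) / piRef m n k j)) := by
  obtain ⟨h0, hq⟩ := hmem
  let D : Fin m → Fin n → ℝ := fun a b =>
    if b = j then ((if a = i then t else 0) - (if a = k then t else 0)) else 0
  let σ : Matrix (Fin m) (Fin n) ℝ := fun a b => π a b + D a b
  have hσ' : ∀ a b, 0 < σ a b ∨ σ a b = π a b := by
    intro a b
    by_cases hb : b = j
    · subst hb
      by_cases hai : a = i
      · subst hai; left; simp [σ, D, hik]; linarith [h0 a b]
      · by_cases hak : a = k
        · subst hak; left; simp [σ, D, hai]; linarith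
        · right; simp [σ, D, hai, hak]
    · right; simp [σ, D, hb]
  have hσ0 : ∀ a b, 0 ≤ σ a b := fun a b => by
    rcases hσ' a b with h | h
    · exact h.le
    · rw [h]; exact h0 a b
  have hσm : σ ∈ GammaStar q := by
    refine ⟨hσ0, ?_⟩
    rw [← hq]
    funext b
    simp only [colSum, σ, D, Finset.sum_add_distrib]
    by_cases hb : b = j <;> simp [hb]
  have hrow : ∀ a, rowSum σ a = rowSum π a + ((if a = i then t else 0) - (if a = k then t else 0)) := by
    intro a
    simp [rowSum, σ, D, Finset.sum_add_distrib]
  have h1 := hopt σ hσm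
  have h2 := Freg_sub_le c p α β hp hα hβ π σ h0 hσ0 hσ'
  have h3 : ∑ a, ∑ b, gradF c p α β σ a b * (σ a b - π a b)
      = t * (gradF c p α β σ i j - gradF c p α β σ k j) := by
    have : ∀ a b, σ a b - π a b = D a b := fun a b => by simp [σ]
    simp only [this, D]
    simp [mul_sub, Finset.sum_sub_distrib]
    ring
  rw [h3] at h2
  have h4 : 0 ≤ gradF c p α β σ i j - gradF c p α β σ k j := by
    by_contra hh
    push Not at hh
    nlinarith
  have e1 : σ i j = π i j + t := by simp [σ, D, hik]
  have e2 : σ k j = π k j - t := by simp [σ, D, hik.symm]; ring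
  have r1 : rowSum σ i = rowSum π i + t := by simp [hrow, hik]
  have r2 : rowSum σ k = rowSum π k - t := by simp [hrow, hik.symm]; ring
  simpa only [gradF, e1, e2, r1, r2] using h4

lemma opt_pos {m n : ℕ} (p : Fin m → ℝ) (q : Fin n → ℝ) (c : Matrix (Fin m) (Fin n) ℝ)
    (hp : ∀ i, 0 < p i) (hq0 : ∀ j, 0 < q j) (α β : ℝ) (hα : 0 < α) (hβ : 0 < β)
    (π : Matrix (Fin m) (Fin n) ℝ) (hmem : π ∈ GammaStar q)
    (hopt : ∀ π' ∈ GammaStar (m := m) q, Freg c p α β π ≤ Freg c p α β π')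
    (i : Fin m) (j : Fin n) : 0 < π i j := by
  by_contra hx
  have hx0 : π i j = 0 := le_antisymm (not_lt.1 hx) (hmem.1 i j)
  obtain ⟨k, hk⟩ : ∃ k, 0 < π k j := by
    by_contra hh
    push Not at hh
    have h1 : colSum π j ≤ 0 := Finset.sum_nonpos fun k _ => hh k
    rw [hmem.2] at h1
    exact absurd (hq0 j) h1.not_gt
  have hik : i ≠ k := by rintro rfl; exact hx hk
  set y := π k j
  have hr0 : 0 ≤ rowSum π i := Finset.sum_nonneg fun b _ => hmem.1 i b
  have hsy : y ≤ rowSum π k :=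
    Finset.single_le_sum (f := fun b => π k b) (fun b _ => hmem.1 k b) (Finset.mem_univ j)
  have hR := piRef_pos i j
  have hR' := piRef_pos k j
  have key : ∀ t, 0 < t → t < y / 2 →
      -(c i j + α⁻¹ * Real.log ((rowSum π i + y) / p i)
        - (c k j + α⁻¹ * Real.log (y / 2 / p k) + β⁻¹ * Real.log (y / 2 / piRef m n k j)))
        ≤ β⁻¹ * Real.log (t / piRef m n i j) := by
    intro t ht hty
    have h := opt_ineq p q c hp α β hα hβ π hmem hopt i k hik j t ht (by linarith)
    rw [hx0, zero_add] at h
    have l1 : Real.log ((rowSum π i + t) / p i) ≤ Real.log ((rowSum π i + y) / p i) :=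
      Real.log_le_log (div_pos (by linarith) (hp i))
        (div_le_div_of_nonneg_right (by linarith) (hp i).le)
    have l2 : Real.log (y / 2 / p k) ≤ Real.log ((rowSum π k - t) / p k) :=
      Real.log_le_log (div_pos (by linarith) (hp k))
        (div_le_div_of_nonneg_right (by linarith) (hp k).le)
    have l3 : Real.log (y / 2 / piRef m n k j) ≤ Real.log ((π k j - t) / piRef m n k j) :=
      Real.log_le_log (div_pos (by linarith) hR')
        (div_le_div_of_nonneg_right (by change y / 2 ≤ y - t; linarith) hR'.le)
    have := mul_le_mul_of_nonneg_left l1 (inv_pos.2 hα).le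
    have := mul_le_mul_of_nonneg_left l2 (inv_pos.2 hα).le
    have := mul_le_mul_of_nonneg_left l3 (inv_pos.2 hβ).le
    linarith
  generalize -(c i j + α⁻¹ * Real.log ((rowSum π i + y) / p i)
        - (c k j + α⁻¹ * Real.log (y / 2 / p k) + β⁻¹ * Real.log (y / 2 / piRef m n k j))) = K at key
  set R := piRef m n i j
  have key2 : ∀ t, 0 < t → t < y / 2 → R * Real.exp (β * K) ≤ t := by
    intro t ht hty
    have h := mul_le_mul_of_nonneg_left (key t ht hty) hβ.le
    rw [← mul_assoc, mul_inv_cancel₀ hβ.ne', one_mul, Real.le_log_iff_exp_le (div_pos ht hR),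
      le_div_iff₀ hR] at h
    linarith
  have hE : 0 < R * Real.exp (β * K) := mul_pos hR (Real.exp_pos _)
  have hm : 0 < min (y / 2) (R * Real.exp (β * K)) := lt_min (by linarith) hE
  have := key2 (min (y / 2) (R * Real.exp (β * K)) / 2) (by linarith)
    (by linarith [min_le_left (y / 2) (R * Real.exp (β * K))])
  linarith [min_le_right (y / 2) (R * Real.exp (β * K))]

lemma opt_grad_le {m n : ℕ} (p : Fin m → ℝ) (q : Fin n → ℝ) (c : Matrix (Fin m) (Fin n) ℝ)
    (hp : ∀ i, 0 < p i) (α β : ℝ) (hα : 0 < α) (hβ : 0 < β)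
    (π : Matrix (Fin m) (Fin n) ℝ) (hmem : π ∈ GammaStar q)
    (hopt : ∀ π' ∈ GammaStar (m := m) q, Freg c p α β π ≤ Freg c p α β π')
    (hpos : ∀ i j, 0 < π i j) (hr : ∀ i, 0 < rowSum π i)
    (i k : Fin m) (j : Fin n) : gradF c p α β π k j ≤ gradF c p α β π i j := by
  by_cases hik : i = k
  · rw [hik]
  let f : ℝ → ℝ := fun t => (c i j + α⁻¹ * Real.log ((rowSum π i + t) / p i)
          + β⁻¹ * Real.log ((π i j + t) / piRef m n i j))
      - (c k j + α⁻¹ * Real.log ((rowSum π k - t) / p k)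
          + β⁻¹ * Real.log ((π k j - t) / piRef m n k j))
  have hf : ContinuousAt f 0 := by
    have n1 : (rowSum π i + 0) / p i ≠ 0 := by simpa using ⟨(hr i).ne', (hp i).ne'⟩
    have n2 : (π i j + 0) / piRef m n i j ≠ 0 := by
      simpa using ⟨(hpos i j).ne', (piRef_pos i j).ne'⟩
    have n3 : (rowSum π k - 0) / p k ≠ 0 := by simpa using ⟨(hr k).ne', (hp k).ne'⟩
    have n4 : (π k j - 0) / piRef m n k j ≠ 0 := by
      simpa using ⟨(hpos k j).ne', (piRef_pos k j).ne'⟩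
    refine ContinuousAt.sub (ContinuousAt.add (ContinuousAt.add continuousAt_const ?_) ?_)
      (ContinuousAt.add (ContinuousAt.add continuousAt_const ?_) ?_)
    · exact continuousAt_const.mul (ContinuousAt.log (by fun_prop) n1)
    · exact continuousAt_const.mul (ContinuousAt.log (by fun_prop) n2)
    · exact continuousAt_const.mul (ContinuousAt.log (by fun_prop) n3)
    · exact continuousAt_const.mul (ContinuousAt.log (by fun_prop) n4)
  have h0 : 0 ≤ f 0 := by
    have ht : Tendsto f (𝓝[>] 0) (𝓝 (f 0)) := hf.tendsto.mono_left nhdsWithin_le_nhds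
    refine ge_of_tendsto ht ?_
    filter_upwards [Ioo_mem_nhdsGT (hpos k j)] with t ht
    exact opt_ineq p q c hp α β hα hβ π hmem hopt i k hik j t ht.1 ht.2
  simp only [f, add_zero, sub_zero] at h0
  unfold gradF
  linarith

/-- key estimate in the proof of Proposition 1.
`KL(π^onl 𝟙 | π^reg 𝟙) ≤ (α/β) log(mn)`. -/
theorem online_vs_regularization_path_KL
    {m n : ℕ} (p : Fin m → ℝ) (q : Fin n → ℝ) (c : Matrix (Fin m) (Fin n) ℝ)
    (hp : p ∈ simplexPos m) (hq : q ∈ simplexPos n)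
    (α β : ℝ) (hα : 0 < α) (hβ : 0 < β)
    (πonl : Matrix (Fin m) (Fin n) ℝ)
    (hπonlmem : πonl ∈ scalingSet c β ∩ GammaStar q)
    (hπonlopt : ∀ π' ∈ scalingSet c β ∩ GammaStar q,
      α * frob c πonl + KLvec (rowSum πonl) p ≤ α * frob c π' + KLvec (rowSum π') p)
    (πreg : Matrix (Fin m) (Fin n) ℝ)
    (hπregmem : πreg ∈ GammaStar q)
    (hπregopt : ∀ π' ∈ GammaStar (m := m) q, Freg c p α β πreg ≤ Freg c p α β π') :
    KLvec (rowSum πonl) (rowSum πreg) ≤ (α / β) * Real.log (m * n) := by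
  obtain ⟨hp0, hp1⟩ := hp
  obtain ⟨hq0, hq1⟩ := hq
  have hpos := opt_pos p q c hp0 hq0 α β hα hβ πreg hπregmem hπregopt
  have hm : 0 < m := by
    rcases Nat.eq_zero_or_pos m with h | h
    · subst h; simp at hp1
    · exact h
  have hn : 0 < n := by
    rcases Nat.eq_zero_or_pos n with h | h
    · subst h; simp at hq1
    · exact h
  have hmR : (0:ℝ) < m := by exact_mod_cast hm
  have hnR : (0:ℝ) < n := by exact_mod_cast hn
  let i0 : Fin m := ⟨0, hm⟩
  let j0 : Fin n := ⟨0, hn⟩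
  have hr : ∀ i, 0 < rowSum πreg i := fun i =>
    Finset.sum_pos (fun j _ => hpos i j) ⟨j0, Finset.mem_univ _⟩
  have hgle := opt_grad_le p q c hp0 α β hα hβ πreg hπregmem hπregopt hpos hr
  have hg : ∀ i j, gradF c p α β πreg i j = gradF c p α β πreg i0 j := fun i j =>
    le_antisymm (hgle i0 i j) (hgle i i0 j)
  obtain ⟨v, hv⟩ : ∃ v : Fin n → ℝ, ∀ i j, gradF c p α β πreg i j = v j := ⟨_, hg⟩
  have hscal : πreg ∈ scalingSet c β := by
    refine ⟨fun i => Real.exp (-(β * (α⁻¹ * Real.log (rowSum πreg i / p i)))),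
      fun j => Real.exp (β * v j) * (1 / (m * n)), fun i => (Real.exp_pos _).le,
      fun j => by positivity, ?_⟩
    funext i j
    have hR := piRef_pos i j
    have h1 : Real.log (πreg i j / piRef m n i j)
        = -(β * (α⁻¹ * Real.log (rowSum πreg i / p i))) + -(β * c i j) + β * v j := by
      rw [← hv i j]
      unfold gradF
      field_simp
      ring
    have h2 : πreg i j / piRef m n i j = _ := (Real.exp_log (div_pos (hpos i j) hR)).symm
    rw [h1, Real.exp_add, Real.exp_add, div_eq_iff hR.ne'] at h2
    rw [h2]
    simp only [piRef]
    ring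
  have hG := hπonlopt πreg ⟨hscal, hπregmem⟩
  obtain ⟨-, hσ0, hσq⟩ := hπonlmem
  have hB := Freg_sub_eq c p α β hp0 πreg πonl hpos hσ0 hr
  have hz : ∑ i, ∑ j, gradF c p α β πreg i j * (πonl i j - πreg i j) = 0 := by
    simp only [hv]
    rw [Finset.sum_comm]
    refine Finset.sum_eq_zero fun j _ => ?_
    rw [← Finset.mul_sum, Finset.sum_sub_distrib]
    have e1 : ∑ i, πonl i j = q j := congrFun hσq j
    have e2 : ∑ i, πreg i j = q j := congrFun hπregmem.2 j
    rw [e1, e2]; simp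
  have hK1 : 0 ≤ KLmat πonl πreg := Finset.sum_nonneg fun i _ => Finset.sum_nonneg fun j _ =>
    aux_pt_nonneg _ _ (hσ0 i j) (hpos i j)
  have hK2 : 0 ≤ KLmat πreg (piRef m n) := Finset.sum_nonneg fun i _ =>
    Finset.sum_nonneg fun j _ => aux_pt_nonneg _ _ (hpos i j).le (piRef_pos i j)
  have htot : ∑ i, ∑ j, πonl i j = 1 := by
    refine (Finset.sum_comm (f := fun i j => πonl i j)).trans ?_
    rw [← hq1]
    exact Finset.sum_congr rfl fun j _ => congrFun hσq j
  have hle1 : ∀ i j, πonl i j ≤ 1 := by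
    intro i j
    rw [← htot]
    exact (Finset.single_le_sum (f := fun b => πonl i b) (fun b _ => hσ0 i b)
      (Finset.mem_univ j)).trans (Finset.single_le_sum (f := fun a => ∑ b, πonl a b)
      (fun a _ => Finset.sum_nonneg fun b _ => hσ0 a b) (Finset.mem_univ i))
  have hK3 : KLmat πonl (piRef m n) ≤ Real.log (m * n) := by
    have h1 : KLmat πonl (piRef m n) ≤
        ∑ i, ∑ j, (Real.log (m * n) * πonl i j - πonl i j + piRef m n i j) := by
      refine Finset.sum_le_sum fun i _ => Finset.sum_le_sum fun j _ => ?_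
      have : πonl i j * Real.log (πonl i j / piRef m n i j) ≤ Real.log (m * n) * πonl i j := by
        rcases (hσ0 i j).eq_or_lt with h | h
        · rw [← h]; simp
        · have e : πonl i j / piRef m n i j = πonl i j * (m * n) := by
            simp only [piRef]; field_simp
          rw [e, mul_comm]
          refine mul_le_mul_of_nonneg_right (Real.log_le_log (by positivity) ?_) h.le
          nlinarith [hle1 i j, mul_pos hmR hnR]
      linarith
    refine h1.trans (le_of_eq ?_)
    simp only [Finset.sum_add_distrib, Finset.sum_sub_distrib, ← Finset.mul_sum, htot]
    simp only [piRef, Finset.sum_const, Finset.card_univ, Fintype.card_fin, nsmul_eq_mul]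
    field_simp
    ring
  rw [hz] at hB
  unfold Freg at hB
  have hB' := congrArg (fun x => α * x) hB
  simp only [mul_add, mul_sub, mul_inv_cancel_left₀ hα.ne'] at hB'
  have hab : 0 ≤ α * β⁻¹ := by positivity
  have a1 := mul_nonneg hab hK1
  have a2 := mul_nonneg hab hK2
  have a3 := mul_le_mul_of_nonneg_left hK3 hab
  rw [div_eq_mul_inv]
  linarith

end
end

section
/- Let p ∈ Δ*_m, q ∈ Δ*_n, c ∈ ℝ^{m×n}, and fix κ ∈ (0,1). Consider the annealing schedule β_t = (1+t)^κ with α_t = β_t − β_{t−1}, let π^reg_t be the unique minimizer over Γ(*,q) of F^reg_t(π) = ⟨c,π⟩ + (1/α_t) KL(π𝟙|p) + (1/β_t) KL(π|π^ref), and let π̄_t = proj_{Γ(p,q)}(π^reg_t) be the output of the rounding procedure (Algorithm 3). Then there exists a constant C (depending on m, n, p, c, κ) such that for all t ≥ 1: ⟨c, π̄_t⟩ − OT(p,q) ≤ C (t^{−κ} + t^{κ−1}). -/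
open Finset Filter Topology ENNReal

noncomputable section

theorem kl_term_bound (x y w : ℝ) (hx : 0 ≤ x) (hw : 0 < w) (h : 0 < y ∨ y = x) :
    (y * Real.log (y / w) - y + w) - (x * Real.log (x / w) - x + w)
      ≤ (y - x) * Real.log (y / w) := by
  rcases h with hy | rfl
  · rcases hx.eq_or_lt with rfl | hx
    · simp; linarith
    · have h1 : Real.log (y / w) - Real.log (x / w) = Real.log (y / x) := by
        rw [Real.log_div hy.ne' hw.ne', Real.log_div hx.ne' hw.ne', Real.log_div hy.ne' hx.ne']
        ring
      have h2 : x * Real.log (y / x) ≤ y - x := by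
        have := Real.log_le_sub_one_of_pos (div_pos hy hx)
        calc x * Real.log (y / x) ≤ x * (y / x - 1) := by gcongr
          _ = y - x := by field_simp
      rw [← h1] at h2
      nlinarith
  · simp

theorem kl_term_nonneg (x w : ℝ) (hx : 0 ≤ x) (hw : 0 < w) :
    0 ≤ x * Real.log (x / w) - x + w := by
  have := kl_term_bound x w w hx hw (Or.inl hw)
  simp [hw.ne'] at this
  linarith

theorem Freg_diff_le {m n : ℕ} (c : Matrix (Fin m) (Fin n) ℝ) (p : Fin m → ℝ)
    (hp : ∀ i, 0 < p i) (hw : (0:ℝ) < 1 / (m * n)) (α β : ℝ) (hα : 0 < α) (hβ : 0 < β)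
    (x y : Matrix (Fin m) (Fin n) ℝ) (hx : ∀ i j, 0 ≤ x i j)
    (h1 : ∀ i j, 0 < y i j ∨ y i j = x i j)
    (h2 : ∀ i, 0 < rowSum y i ∨ rowSum y i = rowSum x i) :
    Freg c p α β y - Freg c p α β x ≤
      ∑ i, ∑ j, (y i j - x i j) * (c i j + α⁻¹ * Real.log (rowSum y i / p i)
        + β⁻¹ * Real.log (y i j / (1 / (m * n)))) := by
  have e1 : frob c y - frob c x = ∑ i, ∑ j, (y i j - x i j) * c i j := by
    simp only [frob, ← Finset.sum_sub_distrib]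
    refine Finset.sum_congr rfl fun i _ => Finset.sum_congr rfl fun j _ => by ring
  have e2 : KLvec (rowSum y) p - KLvec (rowSum x) p ≤
      ∑ i, ∑ j, (y i j - x i j) * Real.log (rowSum y i / p i) := by
    simp only [KLvec, ← Finset.sum_sub_distrib]
    refine Finset.sum_le_sum fun i _ => ?_
    refine (kl_term_bound _ _ _ (Finset.sum_nonneg fun j _ => hx i j) (hp i) (h2 i)).trans_eq ?_
    rw [← Finset.sum_mul, Finset.sum_sub_distrib]
    rfl
  have e3 : KLmat y (piRef m n) - KLmat x (piRef m n) ≤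
      ∑ i, ∑ j, (y i j - x i j) * Real.log (y i j / (1 / (m * n))) := by
    simp only [KLmat, ← Finset.sum_sub_distrib]
    refine Finset.sum_le_sum fun i _ => Finset.sum_le_sum fun j _ => ?_
    exact kl_term_bound _ _ _ (hx i j) hw (h1 i j)
  have e4 : ∑ i, ∑ j, (y i j - x i j) * (c i j + α⁻¹ * Real.log (rowSum y i / p i)
        + β⁻¹ * Real.log (y i j / (1 / (m * n)))) =
      ∑ i, ∑ j, (y i j - x i j) * c i j
      + α⁻¹ * ∑ i, ∑ j, (y i j - x i j) * Real.log (rowSum y i / p i)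
      + β⁻¹ * ∑ i, ∑ j, (y i j - x i j) * Real.log (y i j / (1 / (m * n))) := by
    simp only [Finset.mul_sum, ← Finset.sum_add_distrib]
    refine Finset.sum_congr rfl fun i _ => Finset.sum_congr rfl fun j _ => by ring
  rw [e4, ← e1]
  have := mul_le_mul_of_nonneg_left e2 (inv_pos.2 hα).le
  have := mul_le_mul_of_nonneg_left e3 (inv_pos.2 hβ).le
  simp only [Freg]
  linarith

theorem log_sum_bound {n : ℕ} (a x : Fin n → ℝ) (w δ : ℝ) (hw : 0 < w) (hδ : 0 < δ)
    (ha : ∀ j, 0 ≤ a j) (hx : ∀ j, 0 ≤ x j) (hxa : ∀ j, 0 < a j → 0 < x j)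
    (hA : 0 < ∑ j, a j) (hX : 0 < ∑ j, x j) :
    ∑ j, a j * (Real.log (x j / w) - Real.log (δ * a j / w)) ≤
      (∑ j, a j) * Real.log ((∑ j, x j) / (δ * ∑ j, a j)) := by
  set A := ∑ j, a j
  set X := ∑ j, x j
  set s := X / (δ * A) with hs
  have hspos : 0 < s := by positivity
  have key : ∀ j, a j * (Real.log (x j / w) - Real.log (δ * a j / w)) ≤
      a j * Real.log s + (x j / (δ * s) - a j) := by
    intro j
    rcases (ha j).eq_or_lt with h | h
    · rw [← h]; simp
      have := hx j
      positivity
    · have hxj := hxa j h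
      have e : Real.log (x j / w) - Real.log (δ * a j / w) =
          Real.log s + Real.log (x j / (δ * a j * s)) := by
        rw [Real.log_div hxj.ne' hw.ne', Real.log_div (by positivity) hw.ne',
          Real.log_div hxj.ne' (by positivity), Real.log_mul (by positivity) hspos.ne']
        ring
      have h2 := Real.log_le_sub_one_of_pos (show 0 < x j / (δ * a j * s) by positivity)
      rw [e, mul_add]
      have := mul_le_mul_of_nonneg_left h2 h.le
      have e3 : a j * (x j / (δ * a j * s) - 1) = x j / (δ * s) - a j := by
        field_simp
      linarith
  refine (Finset.sum_le_sum fun j _ => key j).trans_eq ?_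
  rw [Finset.sum_add_distrib, Finset.sum_sub_distrib, ← Finset.sum_mul, ← Finset.sum_div]
  change A * Real.log s + (X / (δ * s) - A) = A * Real.log s
  have : X / (δ * s) = A := by
    rw [hs]; field_simp
  rw [this]; ring

theorem ratio_eps {m n : ℕ} (p : Fin m → ℝ) (q : Fin n → ℝ) (c : Matrix (Fin m) (Fin n) ℝ)
    (hp : ∀ i, 0 < p i) (hw : (0:ℝ) < 1 / (m * n)) (α β : ℝ) (hα : 0 < α) (hβ : 1 ≤ β)
    (π : Matrix (Fin m) (Fin n) ℝ) (hπ : π ∈ GammaStar q)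
    (hopt : ∀ π' ∈ GammaStar (m := m) q, Freg c p α β π ≤ Freg c p α β π')
    (B P : ℝ) (hB : ∀ i j, |c i j| ≤ B) (hP : ∀ i, |Real.log (p i)| ≤ P)
    (i k : Fin m) (hik : i ≠ k) (hi : 0 < rowSum π i) (ε : ℝ) (hε : 0 < ε) (hε1 : ε < 1) :
    (1 - ε) * rowSum π i * p k ≤
      Real.exp (α * (2 * B + 2 * P)) * ((rowSum π k + ε * rowSum π i) * p i) := by
  obtain ⟨h0, hcol⟩ := hπ
  have hβ0 : 0 < β := by linarith
  set d : Fin m → ℝ := fun a => (if a = k then 1 else 0) - (if a = i then 1 else 0) with hd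
  set y : Matrix (Fin m) (Fin n) ℝ := fun a b => π a b + ε * π i b * d a with hy
  have hdi : d i = -1 := by simp [hd, hik]
  have hdk : d k = 1 := by simp [hd, hik.symm]
  have hdo : ∀ a, a ≠ i → a ≠ k → d a = 0 := by intro a h1 h2; simp [hd, h1, h2]
  have hyi : ∀ b, y i b = (1 - ε) * π i b := by intro b; simp only [hy, hdi]; ring
  have hyk : ∀ b, y k b = π k b + ε * π i b := by intro b; simp only [hy, hdk]; ring
  have hyo : ∀ a, a ≠ i → a ≠ k → ∀ b, y a b = π a b := by
    intro a h1 h2 b; simp only [hy, hdo a h1 h2]; ring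
  have hri : rowSum y i = (1 - ε) * rowSum π i := by
    simp only [rowSum, hyi, Finset.mul_sum]
  have hrk : rowSum y k = rowSum π k + ε * rowSum π i := by
    simp only [rowSum, hyk, Finset.mul_sum, Finset.sum_add_distrib]
  have hdelta : 0 < 1 - ε := by linarith
  have hrk0 : 0 ≤ rowSum π k := Finset.sum_nonneg fun j _ => h0 k j
  have hrkpos : 0 < rowSum y k := by rw [hrk]; positivity
  have hripos : 0 < rowSum y i := by rw [hri]; positivity
  have sumd : ∀ f : Fin m → ℝ, ∑ a, d a * f a = f k - f i := by
    intro f; simp [hd, sub_mul, Finset.sum_sub_distrib]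
  have hyk0 : ∀ b, 0 ≤ y k b := fun b => by
    rw [hyk]; have := h0 k b; have := h0 i b; positivity
  have hymem : y ∈ GammaStar (m := m) q := by
    refine ⟨fun a b => ?_, ?_⟩
    · by_cases h1 : a = i
      · subst h1; rw [hyi]; have := h0 a b; positivity
      · by_cases h2 : a = k
        · subst h2; exact hyk0 b
        · rw [hyo a h1 h2]; exact h0 a b
    · rw [← hcol]; funext b
      simp only [colSum, hy, Finset.sum_add_distrib]
      have := sumd (fun _ => ε * π i b)
      simp only [sub_self] at this
      simp only [mul_comm _ (d _), this, add_zero]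
  have h1 : ∀ a b, 0 < y a b ∨ y a b = π a b := by
    intro a b
    by_cases hpos : 0 < π i b
    · by_cases h1 : a = i
      · subst h1; left; rw [hyi]; positivity
      · by_cases h2 : a = k
        · subst h2; left; rw [hyk]; have := h0 a b; positivity
        · right; exact hyo a h1 h2 b
    · right
      have : π i b = 0 := le_antisymm (not_lt.1 hpos) (h0 i b)
      simp [hy, this]
  have h2 : ∀ a, 0 < rowSum y a ∨ rowSum y a = rowSum π a := by
    intro a
    by_cases h1 : a = i
    · subst h1; left; exact hripos
    · by_cases h2 : a = k
      · subst h2; left; exact hrkpos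
      · right; simp only [rowSum, hyo a h1 h2]
  have hF := Freg_diff_le c p hp hw α β hα hβ0 π y h0 h1 h2
  have hF0 := hopt y hymem
  set G : Fin m → Fin n → ℝ := fun a b => c a b + α⁻¹ * Real.log (rowSum y a / p a)
        + β⁻¹ * Real.log (y a b / (1 / (m * n))) with hG
  have hsum : ∑ a, ∑ b, (y a b - π a b) * G a b = ε * ∑ b, π i b * (G k b - G i b) := by
    rw [Finset.sum_comm, Finset.mul_sum]
    refine Finset.sum_congr rfl fun b _ => ?_
    have := sumd (fun a => G a b)
    rw [← this, Finset.mul_sum, Finset.mul_sum]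
    refine Finset.sum_congr rfl fun a _ => ?_
    simp only [hy]; ring
  have hpos : 0 ≤ ∑ b, π i b * (G k b - G i b) := by
    have : 0 ≤ ε * ∑ b, π i b * (G k b - G i b) := by
      rw [← hsum]; simp only [hG]; linarith
    exact nonneg_of_mul_nonneg_right this hε
  set L := Real.log (rowSum y i / p i) - Real.log (rowSum y k / p k) with hL
  have hsplit : ∑ b, π i b * (G k b - G i b) = ∑ b, π i b * (c k b - c i b)
      - rowSum π i * (α⁻¹ * L) + β⁻¹ * ∑ b, π i b *
        (Real.log (y k b / (1 / (m * n))) - Real.log ((1 - ε) * π i b / (1 / (m * n)))) := by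
    simp only [rowSum, Finset.mul_sum, Finset.sum_mul, ← Finset.sum_add_distrib,
      ← Finset.sum_sub_distrib]
    refine Finset.sum_congr rfl fun b _ => ?_
    simp only [hG, hL, hyi b]; ring
  have hc : ∑ b, π i b * (c k b - c i b) ≤ rowSum π i * (2 * B) := by
    simp only [rowSum, Finset.sum_mul]
    refine Finset.sum_le_sum fun b _ => mul_le_mul_of_nonneg_left ?_ (h0 i b)
    have := abs_le.1 (hB k b); have := abs_le.1 (hB i b); linarith
  have hlog := log_sum_bound (fun b => π i b) (fun b => y k b) (1 / (m * n)) (1 - ε) hw hdelta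
    (h0 i) hyk0 (fun b hb => by rw [hyk]; have := h0 k b; positivity) hi hrkpos
  change _ ≤ rowSum π i * Real.log (rowSum y k / ((1 - ε) * rowSum π i)) at hlog
  rw [← hri] at hlog
  have hll : Real.log (rowSum y k / rowSum y i) ≤ - L + 2 * P := by
    rw [hL, Real.log_div hrkpos.ne' hripos.ne', Real.log_div hrkpos.ne' (hp k).ne',
      Real.log_div hripos.ne' (hp i).ne']
    have := abs_le.1 (hP k); have := abs_le.1 (hP i); linarith
  have hmain : 0 ≤ 2 * B - α⁻¹ * L + β⁻¹ * (- L + 2 * P) := by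
    have a1 := mul_le_mul_of_nonneg_left
      (hlog.trans (mul_le_mul_of_nonneg_left hll hi.le)) (inv_pos.2 hβ0).le
    have : 0 ≤ rowSum π i * (2 * B - α⁻¹ * L + β⁻¹ * (- L + 2 * P)) := by
      rw [hsplit] at hpos; nlinarith
    exact nonneg_of_mul_nonneg_right this hi
  have hB0 : 0 ≤ B := (abs_nonneg _).trans (hB i (⟨0, by
    rcases Nat.eq_zero_or_pos n with h | h
    · subst h; simp at hw
    · exact h⟩))
  have hP0 : 0 ≤ P := (abs_nonneg _).trans (hP i)
  have hLle : L ≤ α * (2 * B + 2 * P) := by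
    by_cases hL0 : L ≤ 0
    · exact hL0.trans (by positivity)
    · push Not at hL0
      have hb : β⁻¹ ≤ 1 := inv_le_one_of_one_le₀ hβ
      have hb0 : 0 < β⁻¹ := inv_pos.2 hβ0
      have : α⁻¹ * L ≤ 2 * B + 2 * P := by nlinarith
      calc L = α * (α⁻¹ * L) := by field_simp
        _ ≤ _ := by gcongr
  have hfin : rowSum y i / p i ≤ Real.exp (α * (2 * B + 2 * P)) * (rowSum y k / p k) := by
    have e1 : rowSum y i / p i = Real.exp L * (rowSum y k / p k) := by
      rw [hL, Real.exp_sub, Real.exp_log (div_pos hripos (hp i)),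
        Real.exp_log (div_pos hrkpos (hp k))]
      have := hp k
      field_simp
    rw [e1]
    have := div_pos hrkpos (hp k)
    gcongr
  have hpi := hp i
  have hpk := hp k
  rw [← hri, ← hrk]
  rw [div_le_iff₀ hpi] at hfin
  calc rowSum y i * p k ≤ Real.exp (α * (2 * B + 2 * P)) * (rowSum y k / p k) * p i * p k := by
        gcongr
    _ = _ := by field_simp

theorem ratio_bound {m n : ℕ} (p : Fin m → ℝ) (q : Fin n → ℝ) (c : Matrix (Fin m) (Fin n) ℝ)
    (hp : ∀ i, 0 < p i) (hw : (0:ℝ) < 1 / (m * n)) (α β : ℝ) (hα : 0 < α) (hβ : 1 ≤ β)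
    (π : Matrix (Fin m) (Fin n) ℝ) (hπ : π ∈ GammaStar q)
    (hopt : ∀ π' ∈ GammaStar (m := m) q, Freg c p α β π ≤ Freg c p α β π')
    (B P : ℝ) (hB0 : 0 ≤ B) (hP0 : 0 ≤ P)
    (hB : ∀ i j, |c i j| ≤ B) (hP : ∀ i, |Real.log (p i)| ≤ P)
    (i k : Fin m) :
    rowSum π i * p k ≤ Real.exp (α * (2 * B + 2 * P)) * (rowSum π k * p i) := by
  have hk0 : 0 ≤ rowSum π k := Finset.sum_nonneg fun j _ => hπ.1 k j
  have hi0 : 0 ≤ rowSum π i := Finset.sum_nonneg fun j _ => hπ.1 i j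
  have hpi := hp i
  by_cases hik : i = k
  · subst hik
    have : 1 ≤ Real.exp (α * (2 * B + 2 * P)) := Real.one_le_exp (by positivity)
    exact le_mul_of_one_le_left (by positivity) this
  rcases hi0.eq_or_lt with h | h
  · rw [← h, zero_mul]; positivity
  have h1 : Tendsto (fun ε : ℝ => (1 - ε) * rowSum π i * p k) (𝓝[>] 0)
      (𝓝 ((1 - 0) * rowSum π i * p k)) :=
    ((by fun_prop : Continuous fun ε : ℝ => (1 - ε) * rowSum π i * p k).tendsto 0).mono_left
      nhdsWithin_le_nhds
  have h2 : Tendsto (fun ε : ℝ => Real.exp (α * (2 * B + 2 * P)) *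
      ((rowSum π k + ε * rowSum π i) * p i)) (𝓝[>] 0)
      (𝓝 (Real.exp (α * (2 * B + 2 * P)) * ((rowSum π k + 0 * rowSum π i) * p i))) :=
    ((by fun_prop : Continuous fun ε : ℝ => Real.exp (α * (2 * B + 2 * P)) *
      ((rowSum π k + ε * rowSum π i) * p i)).tendsto 0).mono_left nhdsWithin_le_nhds
  have h3 := le_of_tendsto_of_tendsto h1 h2 (by
    filter_upwards [Ioo_mem_nhdsGT (show (0:ℝ) < 1 by norm_num)] with ε hε
    exact ratio_eps p q c hp hw α β hα hβ π hπ hopt B P hB hP i k hik h ε hε.1 hε.2)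
  simpa using h3

theorem round_bound {m n : ℕ} (p : Fin m → ℝ) (q : Fin n → ℝ) (c : Matrix (Fin m) (Fin n) ℝ)
    (hp : p ∈ simplexPos m) (hq : q ∈ simplexPos n)
    (π : Matrix (Fin m) (Fin n) ℝ) (hπ : π ∈ GammaStar q)
    (B : ℝ) (hB0 : 0 ≤ B) (hB : ∀ i j, |c i j| ≤ B) :
    frob c (roundPlan p q π) - frob c π ≤
      B * (2 * ∑ i, (p i - min (rowSum π i) (p i))) := by
  obtain ⟨h0, hcol⟩ := hπ
  have hr0 : ∀ i, 0 ≤ rowSum π i := fun i => Finset.sum_nonneg fun j _ => h0 i j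
  set π' : Matrix (Fin m) (Fin n) ℝ := fun i j => min 1 (p i / rowSum π i) * π i j with hπ'
  have hs0 : ∀ i, 0 ≤ min 1 (p i / rowSum π i) := fun i =>
    le_min zero_le_one (div_nonneg (hp.1 i).le (hr0 i))
  have hp0 : ∀ i j, 0 ≤ π' i j := fun i j => mul_nonneg (hs0 i) (h0 i j)
  have hple : ∀ i j, π' i j ≤ π i j := fun i j =>
    mul_le_of_le_one_left (h0 i j) (min_le_left _ _)
  have hcle : ∀ j, colSum π' j ≤ q j := fun j => by
    rw [← hcol]; exact Finset.sum_le_sum fun i _ => hple i j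
  have hrow : ∀ i, rowSum π' i = min (rowSum π i) (p i) := by
    intro i
    have : rowSum π' i = min 1 (p i / rowSum π i) * rowSum π i := by
      simp only [rowSum, hπ', Finset.mul_sum]
    rw [this]
    rcases (hr0 i).eq_or_lt with h | h
    · rw [← h, mul_zero, min_eq_left (hp.1 i).le]
    · rw [min_mul_of_nonneg _ _ h.le, one_mul, div_mul_cancel₀ _ h.ne']
  have hpp : (fun i j => π' i j * min 1 (q j / colSum π' j)) = π' := by
    funext i j
    have hc0 : 0 ≤ colSum π' j := Finset.sum_nonneg fun i _ => hp0 i j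
    rcases hc0.eq_or_lt with h | h
    · have : π' i j = 0 :=
        (Finset.sum_eq_zero_iff_of_nonneg (fun i _ => hp0 i j)).1 h.symm i (Finset.mem_univ i)
      rw [this, zero_mul]
    · rw [min_eq_left ((one_le_div h).2 (hcle j)), mul_one]
  set D := ∑ i, (p i - min (rowSum π i) (p i)) with hD
  have hl1 : l1vec (fun i' => p i' - rowSum π' i') = D := by
    simp only [l1vec, hrow, hD]
    refine Finset.sum_congr rfl fun i _ => abs_of_nonneg ?_
    linarith [min_le_right (rowSum π i) (p i)]
  have hround : roundPlan p q π = fun i j => π' i j +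
      (p i - rowSum π' i) * (q j - colSum π' j) / D := by
    have e : roundPlan p q π = (fun (M : Matrix (Fin m) (Fin n) ℝ) => fun i j => M i j +
        (p i - rowSum M i) * (q j - colSum M j) / l1vec (fun i' => p i' - rowSum M i'))
        (fun i j => π' i j * min 1 (q j / colSum π' j)) := rfl
    rw [e, hpp]
    simp only [hl1]
    rfl
  have hD0 : 0 ≤ D := Finset.sum_nonneg fun i _ => by
    linarith [min_le_right (rowSum π i) (p i)]
  have hsp : ∑ i, ∑ j, π' i j = 1 - D := by
    rw [hD, Finset.sum_sub_distrib, hp.2]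
    have : ∑ i, ∑ j, π' i j = ∑ i, min (rowSum π i) (p i) :=
      Finset.sum_congr rfl fun i _ => hrow i
    rw [this]; ring
  have hsπ : ∑ i, ∑ j, π i j = 1 := by
    refine Finset.sum_comm.trans ?_
    rw [← hq.2, ← hcol]; rfl
  have hsq : ∑ j, (q j - colSum π' j) = D := by
    rw [Finset.sum_sub_distrib, hq.2]
    have : ∑ j, colSum π' j = 1 - D := by rw [← hsp, Finset.sum_comm]; rfl
    rw [this]; ring
  have hterm : ∀ i j, 0 ≤ (p i - rowSum π' i) * (q j - colSum π' j) / D := fun i j => by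
    refine div_nonneg (mul_nonneg ?_ (by linarith [hcle j])) hD0
    rw [hrow]; linarith [min_le_right (rowSum π i) (p i)]
  have hsumt : ∑ i, ∑ j, (p i - rowSum π' i) * (q j - colSum π' j) / D = D := by
    simp only [← Finset.sum_div, ← Finset.mul_sum, ← Finset.sum_mul, hsq]
    simp only [hrow]
    rw [← hD, mul_self_div_self]
  calc frob c (roundPlan p q π) - frob c π
      = ∑ i, ∑ j, c i j * ((p i - rowSum π' i) * (q j - colSum π' j) / D - (π i j - π' i j)) := by
        simp only [hround, frob, ← Finset.sum_sub_distrib]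
        refine Finset.sum_congr rfl fun i _ => Finset.sum_congr rfl fun j _ => by ring
    _ ≤ ∑ i, ∑ j, B * ((p i - rowSum π' i) * (q j - colSum π' j) / D + (π i j - π' i j)) := by
        refine Finset.sum_le_sum fun i _ => Finset.sum_le_sum fun j _ => ?_
        have h1 := abs_le.1 (hB i j)
        have h2 := hterm i j
        have h3 := hple i j
        nlinarith
    _ = B * (2 * D) := by
        simp only [← Finset.mul_sum, Finset.sum_add_distrib, Finset.sum_sub_distrib, hsumt, hsp,
          hsπ]
        ring

theorem mass_bound {m : ℕ} (p r : Fin m → ℝ) (E : ℝ) (hE : 1 ≤ E)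
    (hps : ∑ i, p i = 1) (hr : ∀ i, 0 ≤ r i) (hrs : ∑ i, r i = 1)
    (h : ∀ i k, r i * p k ≤ E * (r k * p i)) :
    ∑ i, (p i - min (r i) (p i)) ≤ E - 1 := by
  have h1 : ∀ k, p k ≤ E * r k := by
    intro k
    have := Finset.sum_le_sum fun i (_ : i ∈ Finset.univ) => h i k
    rwa [← Finset.sum_mul, ← Finset.mul_sum, ← Finset.mul_sum, hrs, hps, one_mul, mul_one] at this
  calc ∑ i, (p i - min (r i) (p i)) ≤ ∑ i, (E - 1) * r i := by
        refine Finset.sum_le_sum fun i _ => ?_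
        have := hr i
        rcases min_cases (r i) (p i) with ⟨h2, _⟩ | ⟨h2, _⟩ <;> rw [h2]
        · linarith [h1 i]
        · nlinarith
    _ = E - 1 := by rw [← Finset.mul_sum, hrs, mul_one]

theorem cost_bound {m n : ℕ} (p : Fin m → ℝ) (q : Fin n → ℝ) (c : Matrix (Fin m) (Fin n) ℝ)
    (hp : p ∈ simplexPos m) (hq : q ∈ simplexPos n)
    (hm : 0 < m) (hn : 0 < n) (α β : ℝ) (hα : 0 < α) (hβ : 0 < β)
    (π : Matrix (Fin m) (Fin n) ℝ) (hπ : π ∈ GammaStar q)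
    (hopt : ∀ π' ∈ GammaStar (m := m) q, Freg c p α β π ≤ Freg c p α β π') :
    frob c π - OTval c p q ≤ β⁻¹ * Real.log (m * n) := by
  have hm' : (0:ℝ) < m := by exact_mod_cast hm
  have hn' : (0:ℝ) < n := by exact_mod_cast hn
  have hne : Nonempty (Gamma p q) := by
    refine ⟨⟨fun i j => p i * q j, fun i j => (mul_pos (hp.1 i) (hq.1 j)).le, ?_, ?_⟩⟩
    · funext i; simp only [rowSum, ← Finset.mul_sum, hq.2, mul_one]
    · funext j; simp only [colSum, ← Finset.sum_mul, hp.2, one_mul]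
  have : frob c π - β⁻¹ * Real.log (m * n) ≤ OTval c p q := by
    refine le_ciInf fun ⟨x, hx0, hxr, hxc⟩ => ?_
    have h1 := hopt x ⟨hx0, hxc⟩
    have hw : (0:ℝ) < 1 / (m * n) := by positivity
    have k1 : 0 ≤ KLvec (rowSum π) p := Finset.sum_nonneg fun i _ =>
      kl_term_nonneg _ _ (Finset.sum_nonneg fun j _ => hπ.1 i j) (hp.1 i)
    have k2 : 0 ≤ KLmat π (piRef m n) := Finset.sum_nonneg fun i _ => Finset.sum_nonneg fun j _ =>
      kl_term_nonneg _ _ (hπ.1 i j) hw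
    have k3 : KLvec (rowSum x) p = 0 := by
      rw [hxr]; simp only [KLvec]
      refine Finset.sum_eq_zero fun i _ => ?_
      rw [div_self (hp.1 i).ne']; simp
    have hxs : ∑ i, ∑ j, x i j = 1 := by rw [← hp.2, ← hxr]; rfl
    have hx1 : ∀ i j, x i j ≤ 1 := fun i j => by
      rw [← hxs]
      refine (Finset.single_le_sum (fun j _ => hx0 i j) (Finset.mem_univ j)).trans ?_
      exact Finset.single_le_sum (f := fun i => ∑ j, x i j)
        (fun i _ => Finset.sum_nonneg fun j _ => hx0 i j) (Finset.mem_univ i)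
    have k4 : KLmat x (piRef m n) ≤ Real.log (m * n) := by
      calc KLmat x (piRef m n) ≤
          ∑ i, ∑ j, (x i j * Real.log (m * n) - x i j + 1 / (m * n)) := by
            refine Finset.sum_le_sum fun i _ => Finset.sum_le_sum fun j _ => ?_
            have : x i j * Real.log (x i j / piRef m n i j) ≤ x i j * Real.log (m * n) := by
              rcases (hx0 i j).eq_or_lt with h | h
              · rw [← h]; simp
              · refine mul_le_mul_of_nonneg_left (Real.log_le_log ?_ ?_) h.le
                · exact div_pos h hw
                · rw [piRef, div_div_eq_mul_div, div_one]
                  exact mul_le_of_le_one_left (by positivity) (hx1 i j)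
            have e : piRef m n i j = 1 / (m * n) := rfl
            linarith
        _ = Real.log (m * n) := by
            simp only [Finset.sum_add_distrib, Finset.sum_sub_distrib, ← Finset.sum_mul, hxs]
            simp
            field_simp
            ring
    simp only [Freg] at h1
    rw [k3] at h1
    have := mul_nonneg (inv_pos.2 hα).le k1
    have := mul_nonneg (inv_pos.2 hβ).le k2
    have := mul_le_mul_of_nonneg_left k4 (inv_pos.2 hβ).le
    show _ ≤ frob c x
    linarith
  linarith

/-- Theorem 2, Eq. (13): rate for polynomial schedules `β_t = (1+t)^κ`.
There is a constant `C` such that `⟨c,π̄_t⟩ - OT(p,q) ≤ C(t^{-κ} + t^{κ-1})` for all `t ≥ 1`. -/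
theorem regularization_path_polynomial_rate
    {m n : ℕ} (p : Fin m → ℝ) (q : Fin n → ℝ) (c : Matrix (Fin m) (Fin n) ℝ)
    (hp : p ∈ simplexPos m) (hq : q ∈ simplexPos n)
    (κ : ℝ) (hκ0 : 0 < κ) (hκ1 : κ < 1)
    (β : ℕ → ℝ) (hβ : ∀ t, β t = (1 + (t : ℝ)) ^ κ)
    (πreg : ℕ → Matrix (Fin m) (Fin n) ℝ)
    (hπregmem : ∀ t : ℕ, 1 ≤ t → πreg t ∈ GammaStar q)
    (hπregopt : ∀ t : ℕ, 1 ≤ t → ∀ π' ∈ GammaStar (m := m) q,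
      Freg c p (β t - β (t - 1)) (β t) (πreg t) ≤ Freg c p (β t - β (t - 1)) (β t) π') :
    ∃ C : ℝ, ∀ t : ℕ, 1 ≤ t →
      frob c (roundPlan p q (πreg t)) - OTval c p q ≤
        C * ((t : ℝ) ^ (-κ) + (t : ℝ) ^ (κ - 1)) := by
  have hm : 0 < m := by
    rcases Nat.eq_zero_or_pos m with h | h
    · subst h; have := hp.2; simp at this
    · exact h
  have hn : 0 < n := by
    rcases Nat.eq_zero_or_pos n with h | h
    · subst h; have := hq.2; simp at this
    · exact h
  have hm' : (1:ℝ) ≤ m := by exact_mod_cast hm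
  have hn' : (1:ℝ) ≤ n := by exact_mod_cast hn
  have hw : (0:ℝ) < 1 / (m * n) := by positivity
  obtain ⟨B, hB0, hB⟩ : ∃ B : ℝ, 0 ≤ B ∧ ∀ i j, |c i j| ≤ B := by
    refine ⟨∑ i, ∑ j, |c i j|, by positivity, fun i j => ?_⟩
    refine (Finset.single_le_sum (f := fun j => |c i j|) (fun j _ => abs_nonneg _)
      (Finset.mem_univ j)).trans ?_
    exact Finset.single_le_sum (f := fun i => ∑ j, |c i j|)
        (fun i _ => Finset.sum_nonneg fun j _ => abs_nonneg _) (Finset.mem_univ i)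
  obtain ⟨P, hP0, hP⟩ : ∃ P : ℝ, 0 ≤ P ∧ ∀ i, |Real.log (p i)| ≤ P := by
    refine ⟨∑ i, |Real.log (p i)|, by positivity, fun i => ?_⟩
    exact Finset.single_le_sum (f := fun i => |Real.log (p i)|) (fun j _ => abs_nonneg _)
      (Finset.mem_univ i)
  set K := 2 * B + 2 * P with hK
  have hK0 : 0 ≤ K := by positivity
  have hlog0 : 0 ≤ Real.log (m * n) := Real.log_nonneg (by nlinarith)
  set C1 := B * (2 * (K * Real.exp K)) with hC1
  have hC10 : 0 ≤ C1 := by positivity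
  refine ⟨Real.log (m * n) + C1, fun t ht => ?_⟩
  have ht' : (1:ℝ) ≤ t := by exact_mod_cast ht
  have ht0 : (0:ℝ) < t := by linarith
  have hβ1 : β (t - 1) = (t:ℝ) ^ κ := by
    rw [hβ]; congr 1; push_cast [Nat.cast_sub ht]; ring
  have hβge : 1 ≤ β t := by rw [hβ]; exact Real.one_le_rpow (by linarith) hκ0.le
  set α := β t - β (t - 1) with hα
  have hαpos : 0 < α := by
    rw [hα, hβ1, hβ]
    have := Real.rpow_lt_rpow ht0.le (show (t:ℝ) < 1 + t by linarith) hκ0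
    linarith
  have hαle : α ≤ (t:ℝ) ^ (κ - 1) := by
    have e1 : (1 + (t:ℝ)) ^ κ = (t:ℝ) ^ κ * (1 + 1 / t) ^ κ := by
      rw [← Real.mul_rpow ht0.le (by positivity)]
      congr 1; field_simp; ring
    have e2 : (1 + 1 / (t:ℝ)) ^ κ ≤ 1 + 1 / t := by
      have h1 : 1 ≤ 1 + 1 / (t:ℝ) := by
        have : 0 ≤ 1 / (t:ℝ) := by positivity
        linarith
      calc (1 + 1 / (t:ℝ)) ^ κ ≤ (1 + 1 / (t:ℝ)) ^ (1:ℝ) :=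
            Real.rpow_le_rpow_of_exponent_le h1 hκ1.le
        _ = _ := Real.rpow_one _
    have e3 : (t:ℝ) ^ (κ - 1) = (t:ℝ) ^ κ / t := by
      rw [Real.rpow_sub ht0, Real.rpow_one]
    rw [hα, hβ1, hβ, e1, e3]
    have := mul_le_mul_of_nonneg_left e2 (Real.rpow_nonneg ht0.le κ)
    have e4 : (t:ℝ) ^ κ * (1 + 1 / t) = (t:ℝ) ^ κ + (t:ℝ) ^ κ / t := by ring
    linarith
  have hα1 : α ≤ 1 := hαle.trans (Real.rpow_le_one_of_one_le_of_nonpos ht' (by linarith))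
  have hβinv : (β t)⁻¹ ≤ (t:ℝ) ^ (-κ) := by
    rw [Real.rpow_neg ht0.le, hβ]
    have : 0 < (t:ℝ) ^ κ := by positivity
    gcongr
    linarith
  have hmem := hπregmem t ht
  have hopt := hπregopt t ht
  have b1 := cost_bound p q c hp hq hm hn α (β t) hαpos (by linarith) (πreg t) hmem hopt
  have b2 := round_bound p q c hp hq (πreg t) hmem B hB0 hB
  have hrs : ∑ i, rowSum (πreg t) i = 1 := by
    rw [← hq.2, ← hmem.2]; simp only [rowSum, colSum]; exact Finset.sum_comm
  have b3 := mass_bound p (rowSum (πreg t)) (Real.exp (α * K)) (Real.one_le_exp (by positivity))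
    hp.2 (fun i => Finset.sum_nonneg fun j _ => hmem.1 i j) hrs
    (fun i k => ratio_bound p q c hp.1 hw α (β t) hαpos hβge (πreg t) hmem hopt B P hB0 hP0 hB hP
      i k)
  have b4 : Real.exp (α * K) - 1 ≤ α * (K * Real.exp K) := by
    have h1 : Real.exp (α * K) - 1 ≤ α * K * Real.exp (α * K) := by
      have h2 := Real.add_one_le_exp (-(α * K))
      have h3 : Real.exp (-(α * K)) * Real.exp (α * K) = 1 := by
        rw [← Real.exp_add]; simp
      have := Real.exp_pos (α * K)
      nlinarith
    have h4 : Real.exp (α * K) ≤ Real.exp K :=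
      Real.exp_le_exp.2 (mul_le_of_le_one_left hK0 hα1)
    have h5 := mul_le_mul_of_nonneg_left h4 (mul_nonneg hαpos.le hK0)
    linarith
  have b5 : B * (2 * ∑ i, (p i - min (rowSum (πreg t) i) (p i))) ≤ C1 * α := by
    calc _ ≤ B * (2 * (α * (K * Real.exp K))) := by
          have := b3.trans b4
          gcongr
      _ = C1 * α := by rw [hC1]; ring
  have b6 : C1 * α ≤ C1 * (t:ℝ) ^ (κ - 1) := by gcongr
  have b7 : (β t)⁻¹ * Real.log (m * n) ≤ Real.log (m * n) * (t:ℝ) ^ (-κ) := by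
    rw [mul_comm]; gcongr
  have z1 : 0 ≤ C1 * (t:ℝ) ^ (-κ) := by positivity
  have z2 : 0 ≤ Real.log (m * n) * (t:ℝ) ^ (κ - 1) := by positivity
  have : (Real.log (m * n) + C1) * ((t : ℝ) ^ (-κ) + (t : ℝ) ^ (κ - 1)) =
    Real.log (m * n) * (t : ℝ) ^ (-κ) + C1 * (t:ℝ) ^ (κ - 1) + C1 * (t:ℝ) ^ (-κ)
      + Real.log (m * n) * (t:ℝ) ^ (κ - 1) := by ring
  linarith

end
end

section
/- Let p ∈ Δ*_m, q ∈ Δ*_n, c ∈ ℝ^{m×n}, and let α > 0, β > 0. Let (u,v) ∈ ℝ^m × ℝ^n be the maximizer of the dual functional D(u,v) = (1/α)⟨𝟙 − e^{−αu}, p⟩ + ⟨v, q⟩ − (1/β)⟨e^{β(u𝟙ᵀ + 𝟙vᵀ − c)}, π^ref⟩ + 1/β (exponentials entrywise). Then ‖u‖_∞ ≤ (β/(α+β)) · (4‖log p‖_∞/β + ‖c‖_osc). -/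
open Finset Filter Topology ENNReal

noncomputable section

theorem dual_foc {m n : ℕ} (p : Fin m → ℝ) (q : Fin n → ℝ) (c : Matrix (Fin m) (Fin n) ℝ)
    (α β : ℝ) (hα : 0 < α) (hβ : 0 < β)
    (u : Fin m → ℝ) (v : Fin n → ℝ)
    (hmax : ∀ (u' : Fin m → ℝ) (v' : Fin n → ℝ),
      dualFun p q c α β u' v' ≤ dualFun p q c α β u v)
    (a : Fin m → ℝ) (b : Fin n → ℝ) :
    ∑ i, a i * (Real.exp (-(α * u i)) * p i) + ∑ j, b j * q j
      = ∑ i, ∑ j, (a i + b j) * (Real.exp (β * (u i + v j - c i j)) * piRef m n i j) := by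
  have h1 : ∀ i, HasDerivAt (fun t : ℝ => (1 - Real.exp (-(α * (u i + t * a i)))) * p i)
      (α * (a i * (Real.exp (-(α * u i)) * p i))) 0 := by
    intro i
    have h0 : HasDerivAt (fun t : ℝ => -(α * (u i + t * a i))) (-(α * (1 * a i))) 0 :=
      ((((hasDerivAt_id (0:ℝ)).mul_const (a i)).const_add (u i)).const_mul α).neg
    have := ((h0.exp).const_sub 1).mul_const (p i)
    refine HasDerivAt.congr_deriv this ?_
    simp; ring
  have h2 : ∀ j, HasDerivAt (fun t : ℝ => (v j + t * b j) * q j) (b j * q j) 0 := by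
    intro j
    have := (((hasDerivAt_id (0:ℝ)).mul_const (b j)).const_add (v j)).mul_const (q j)
    refine HasDerivAt.congr_deriv this ?_
    simp
  have h3 : ∀ i j, HasDerivAt (fun t : ℝ => Real.exp (β * ((u i + t * a i) + (v j + t * b j) - c i j)) * piRef m n i j)
      (β * ((a i + b j) * (Real.exp (β * (u i + v j - c i j)) * piRef m n i j))) 0 := by
    intro i j
    have h0 : HasDerivAt (fun t : ℝ => β * ((u i + t * a i) + (v j + t * b j) - c i j))
        (β * (1 * a i + 1 * b j)) 0 :=
      (((((hasDerivAt_id (0:ℝ)).mul_const (a i)).const_add (u i)).add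
        (((hasDerivAt_id (0:ℝ)).mul_const (b j)).const_add (v j))).sub_const (c i j)).const_mul β
    have := (h0.exp).mul_const (piRef m n i j)
    refine HasDerivAt.congr_deriv this ?_
    simp; ring
  have hD : HasDerivAt (fun t : ℝ => dualFun p q c α β (fun i => u i + t * a i) (fun j => v j + t * b j))
      (α⁻¹ * (∑ i, α * (a i * (Real.exp (-(α * u i)) * p i))) + ∑ j, b j * q j
        - β⁻¹ * ∑ i, ∑ j, β * ((a i + b j) * (Real.exp (β * (u i + v j - c i j)) * piRef m n i j))) 0 := by
    unfold dualFun
    exact ((((HasDerivAt.fun_sum fun i _ => h1 i).const_mul α⁻¹).add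
      (HasDerivAt.fun_sum fun j _ => h2 j)).sub
      ((HasDerivAt.fun_sum fun i _ => HasDerivAt.fun_sum fun j _ => h3 i j).const_mul β⁻¹)).add_const _
  have hloc : IsLocalMax (fun t : ℝ => dualFun p q c α β (fun i => u i + t * a i) (fun j => v j + t * b j)) 0 := by
    refine Filter.Eventually.of_forall fun t => ?_
    simpa using hmax (fun i => u i + t * a i) (fun j => v j + t * b j)
  have h := hloc.hasDerivAt_eq_zero hD
  simp only [← Finset.mul_sum] at h
  rw [inv_mul_cancel_left₀ hα.ne', inv_mul_cancel_left₀ hβ.ne'] at h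
  linarith

/-- ℓ∞ bound on the optimal dual variable, from the proof of Lemma 4.
If `(u,v)` maximizes the dual functional `D`, then
`‖u‖_∞ ≤ (β/(α+β))(4‖log p‖_∞/β + ‖c‖_osc)`. -/
theorem dual_variable_linf_bound
    {m n : ℕ} (p : Fin m → ℝ) (q : Fin n → ℝ) (c : Matrix (Fin m) (Fin n) ℝ)
    (hp : p ∈ simplexPos m) (hq : q ∈ simplexPos n)
    (α β : ℝ) (hα : 0 < α) (hβ : 0 < β)
    (u : Fin m → ℝ) (v : Fin n → ℝ)
    (hmax : ∀ (u' : Fin m → ℝ) (v' : Fin n → ℝ),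
      dualFun p q c α β u' v' ≤ dualFun p q c α β u v) :
    (⨆ i, |u i|) ≤ (β / (α + β)) * (4 * logSup p / β + cOsc c) := by
  obtain ⟨hp0, hp1⟩ := hp
  obtain ⟨hq0, hq1⟩ := hq
  have foc := dual_foc p q c α β hα hβ u v hmax
  have hm : Nonempty (Fin m) := by
    by_contra h
    rw [not_nonempty_iff] at h
    simp at hp1
  have hn : Nonempty (Fin n) := by
    by_contra h
    rw [not_nonempty_iff] at h
    simp at hq1
  have hm0 : (0:ℝ) < m := by exact_mod_cast Fin.pos_iff_nonempty.2 hm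
  have hn0 : (0:ℝ) < n := by exact_mod_cast Fin.pos_iff_nonempty.2 hn
  have hr : ∀ i j, 0 < piRef m n i j := fun i j => by unfold piRef; positivity
  have hab : 0 < α + β := by positivity
  -- total mass
  have htot : ∑ i, Real.exp (-(α * u i)) * p i = 1 := by
    have e1 := foc (fun _ => 1) (fun _ => 0)
    have e2 := foc (fun _ => 0) (fun _ => 1)
    simp only [one_mul, zero_mul, add_zero, zero_add, Finset.sum_const_zero] at e1 e2
    rw [e1, ← e2, hq1]
  -- row equations
  have hrow : ∀ i, Real.exp (-(α * u i)) * p i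
      = Real.exp (β * u i) * ∑ j, Real.exp (β * (v j - c i j)) * piRef m n i j := by
    intro i
    have e := foc (fun k => if k = i then 1 else 0) (fun _ => 0)
    simp only [ite_mul, one_mul, zero_mul, add_zero, Finset.sum_const_zero,
      Finset.sum_ite_eq', Finset.mem_univ, if_true] at e
    rw [Finset.sum_eq_single i (fun k _ hk => by simp [hk]) (by simp)] at e
    simp only [if_true] at e
    rw [e, Finset.mul_sum]
    refine Finset.sum_congr rfl fun j _ => ?_
    rw [← mul_assoc, ← Real.exp_add]
    congr 2; ring
  have hS : ∀ i, 0 < ∑ j, Real.exp (β * (v j - c i j)) * piRef m n i j := fun i =>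
    Finset.sum_pos (fun j _ => mul_pos (Real.exp_pos _) (hr i j)) Finset.univ_nonempty
  have hlog : ∀ i, (α + β) * u i
      = Real.log (p i) - Real.log (∑ j, Real.exp (β * (v j - c i j)) * piRef m n i j) := by
    intro i
    have := congrArg Real.log (hrow i)
    rw [Real.log_mul (Real.exp_pos _).ne' (hp0 i).ne', Real.log_mul (Real.exp_pos _).ne' (hS i).ne',
      Real.log_exp, Real.log_exp] at this
    linarith
  have hosc : ∀ i k j, c i j - c k j ≤ cOsc c := by
    intro i k j
    unfold cOsc
    have b1 : c i j ≤ ⨆ i, ⨆ j, c i j :=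
      (le_ciSup (f := fun j => c i j) (Set.finite_range _).bddAbove j).trans
        (le_ciSup (f := fun i => ⨆ j, c i j) (Set.finite_range _).bddAbove i)
    have b2 : ⨅ i, ⨅ j, c i j ≤ c k j :=
      (ciInf_le (f := fun i => ⨅ j, c i j) (Set.finite_range _).bddBelow k).trans
        (ciInf_le (f := fun j => c k j) (Set.finite_range _).bddBelow j)
    linarith
  have hSle : ∀ i k, Real.log (∑ j, Real.exp (β * (v j - c k j)) * piRef m n k j)
      ≤ β * cOsc c + Real.log (∑ j, Real.exp (β * (v j - c i j)) * piRef m n i j) := by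
    intro i k
    rw [← Real.log_exp (β * cOsc c), ← Real.log_mul (Real.exp_pos _).ne' (hS i).ne']
    refine Real.log_le_log (hS k) ?_
    rw [Finset.mul_sum]
    refine Finset.sum_le_sum fun j _ => ?_
    rw [← mul_assoc, ← Real.exp_add]
    refine mul_le_mul_of_nonneg_right (Real.exp_le_exp.2 ?_) (hr k j).le
    have := mul_le_mul_of_nonneg_left (hosc i k j) hβ.le
    linarith
  have hL : ∀ k, |Real.log (p k)| ≤ logSup p := fun k =>
    le_ciSup (f := fun i => |Real.log (p i)|) (Set.finite_range _).bddAbove k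
  have hdiff : ∀ i k, (α + β) * (u i - u k) ≤ 4 * logSup p + β * cOsc c := by
    intro i k
    have := hSle i k
    have h1 := abs_le.1 (hL i)
    have h2 := abs_le.1 (hL k)
    have := hlog i
    have := hlog k
    have := (abs_nonneg _).trans (hL i)
    linarith
  obtain ⟨k1, hk1⟩ : ∃ k, u k ≤ 0 := by
    by_contra! h
    have : ∑ i, Real.exp (-(α * u i)) * p i < ∑ i, p i := by
      refine Finset.sum_lt_sum_of_nonempty Finset.univ_nonempty fun i _ => ?_
      have : Real.exp (-(α * u i)) < 1 := Real.exp_lt_one_iff.2 (by have := mul_pos hα (h i); linarith)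
      nlinarith [hp0 i]
    linarith
  obtain ⟨k2, hk2⟩ : ∃ k, 0 ≤ u k := by
    by_contra! h
    have : ∑ i, p i < ∑ i, Real.exp (-(α * u i)) * p i := by
      refine Finset.sum_lt_sum_of_nonempty Finset.univ_nonempty fun i _ => ?_
      have : 1 < Real.exp (-(α * u i)) :=
        Real.one_lt_exp_iff.2 (by have := mul_neg_of_pos_of_neg hα (h i); linarith)
      nlinarith [hp0 i]
    linarith
  have hrhs : (β / (α + β)) * (4 * logSup p / β + cOsc c)
      = (4 * logSup p + β * cOsc c) / (α + β) := by
    field_simp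
  rw [hrhs]
  refine ciSup_le fun i => ?_
  rw [le_div_iff₀ hab]
  have d1 := hdiff i k1
  have d2 := hdiff k2 i
  have m1 := mul_nonneg hab.le (neg_nonneg.2 hk1)
  have m2 := mul_nonneg hab.le hk2
  rcases abs_cases (u i) with ⟨h, _⟩ | ⟨h, _⟩ <;> rw [h] <;> linarith

end
end
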